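/- arXiv:2511.19309 — 3 statements merged into one kernel-verified Lean document; each statement's English description precedes it below -/
import Mathlib

section
/- Let 𝒫 be a generalized perimeter on measurable subsets of 𝕋^{d−1} × ℝ. Then for every R > 0 and every λ ∈ (−R, R), the periodic halfspace H_λ := 𝕋^{d−1} × (−∞, λ) minimizes 𝒫 in 𝔐_R, i.e. 𝒫(H_λ) ≤ 𝒫(F) for every F ∈ 𝔐_R. -/
open MeasureTheory Filter Set
open scoped ENNReal

noncomputable section

/-- The flat torus `𝕋^{d-1}`. -/
abbrev Torus (d : ℕ) : Type := Fin (d-1) → AddCircle (1:ℝ)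

/-- The periodic strip `𝕋^{d-1} × ℝ`. -/
abbrev Cyl (d : ℕ) : Type := Torus d × ℝ

/-- The subgraph of a function `g : 𝕋^{d-1} → ℝ`. -/
def subgraph (d : ℕ) (g : Torus d → ℝ) : Set (Cyl d) := {x | x.2 ≤ g x.1}

/-- The class `𝔠_L` of periodic `L`-Lipschitz subgraphs. -/
def LipClass (d : ℕ) (L : ℝ) : Set (Set (Cyl d)) :=
  {E | ∃ g : Torus d → ℝ, LipschitzWith (Real.toNNReal L) g ∧ E = subgraph d g}

/-- The slab `𝕊^d_R = 𝕋^{d-1} × (-R, R)`. -/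
def SlabR (d : ℕ) (R : ℝ) : Set (Cyl d) := {x | -R < x.2 ∧ x.2 < R}

/-- The class `𝔐_R` of measurable sets squeezed between two halfspaces. -/
def MR (d : ℕ) (R : ℝ) : Set (Set (Cyl d)) :=
  {E | MeasurableSet E ∧ {x : Cyl d | x.2 < -R} ⊆ E ∧ E ⊆ {x : Cyl d | x.2 < R}}

/-- The periodic halfspace `H_λ = 𝕋^{d-1} × (-∞, λ)`. -/
def halfspace (d : ℕ) (lam : ℝ) : Set (Cyl d) := {x | x.2 < lam}

/-- Translation of `𝕋^{d-1} × ℝ` by a vector `τ ∈ ℝ^d = ℝ^{d-1} × ℝ`,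
acting through the quotient. -/
def translCyl (d : ℕ) (τ : (Fin (d-1) → ℝ) × ℝ) (x : Cyl d) : Cyl d :=
  (fun i => x.1 i + (τ.1 i : AddCircle (1:ℝ)), x.2 + τ.2)

/-- A generalized perimeter: a functional `𝒫 : 𝔐 → [0,+∞]` satisfying properties
(i)-(vi) of Definition 1.2. -/
structure GenPerimeter (d : ℕ) where
  P : Set (Cyl d) → ℝ≥0∞
  /-- (i) finiteness on periodic Lipschitz subgraphs -/
  lip_finite : ∀ L : ℝ, 0 < L → ∀ E ∈ LipClass d L, P E < ⊤
  /-- (ii) `𝒫(∅) = 0` -/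
  empty_eq : P ∅ = 0
  /-- (ii) `𝒫(𝕋^{d-1} × ℝ) = 0` -/
  univ_eq : P Set.univ = 0
  /-- (iii) invariance under modifications on null sets -/
  congr_ae : ∀ E E' : Set (Cyl d), volume (symmDiff E E') = 0 → P E = P E'
  /-- (iv) lower semicontinuity w.r.t. local `L¹` convergence -/
  lsc : ∀ (En : ℕ → Set (Cyl d)) (E : Set (Cyl d)),
      (∀ R : ℝ, 0 < R →
        Tendsto (fun n => volume (symmDiff (En n) E ∩ SlabR d R)) atTop (nhds 0)) →
      P E ≤ liminf (fun n => P (En n)) atTop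
  /-- (v) submodularity -/
  submodular : ∀ E F : Set (Cyl d), P (E ∪ F) + P (E ∩ F) ≤ P E + P F
  /-- (vi) translational invariance -/
  transl_inv : ∀ (E : Set (Cyl d)) (τ : (Fin (d-1) → ℝ) × ℝ), P (translCyl d τ '' E) = P E

/-- Signed distance from a set `E`. -/
def sdist (d : ℕ) (E : Set (Cyl d)) (x : Cyl d) : ℝ :=
  Metric.infDist x E - Metric.infDist x Eᶜ

/-- The incremental functional `𝓕̃_h(E, F) = 𝒫(F) + (1/h) ∫_{F ∩ 𝕊^d_R} sdist_E`. -/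
def Ftilde (d : ℕ) (P : GenPerimeter d) (R h : ℝ) (E F : Set (Cyl d)) : EReal :=
  (P.P F : EReal) + (((1/h) * ∫ x in F ∩ SlabR d R, sdist d E x) : ℝ)

/-- `F` minimizes `𝓕̃_h(E, ·)` in `𝔐_R`. -/
def IsMinimizer (d : ℕ) (P : GenPerimeter d) (R h : ℝ) (E F : Set (Cyl d)) : Prop :=
  F ∈ MR d R ∧ ∀ F' ∈ MR d R, Ftilde d P R h E F ≤ Ftilde d P R h E F'


open Classical in
def cntS {S X : Type*} (A : S → Set X) (l : List S) (x : X) : ℕ :=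
  (l.map (fun s => if x ∈ A s then 1 else 0)).sum

theorem uncross {d : ℕ} (P : GenPerimeter d) {S : Type*} (A : S → Set (Cyl d)) (l : List S) (m : ℕ) :
    ∑ j ∈ Finset.range m, P.P {x | j ≤ cntS A l x} ≤ (l.map (fun s => P.P (A s))).sum := by
  induction l generalizing m with
  | nil =>
    apply le_of_eq
    simp only [List.map_nil, List.sum_nil]
    apply Finset.sum_eq_zero
    intro j _
    rcases Nat.eq_zero_or_pos j with h | h
    · subst h; simpa using P.univ_eq
    · have : {x : Cyl d | j ≤ cntS A [] x} = ∅ := by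
        ext x; simp [cntS]; omega
      rw [this, P.empty_eq]
  | cons s l ih =>
    have key : ∀ m : ℕ, ∑ j ∈ Finset.range (m+1), P.P {x | j ≤ cntS A (s :: l) x}
        + P.P ({x | m ≤ cntS A l x} ∩ A s) ≤
        ∑ j ∈ Finset.range (m+1), P.P {x | j ≤ cntS A l x} + P.P (A s) := by
      intro m
      induction m with
      | zero => simp
      | succ m ihm =>
        rw [Finset.sum_range_succ, Finset.sum_range_succ _ (m+1)]
        have h := P.submodular {x | m+1 ≤ cntS A l x} ({x | m ≤ cntS A l x} ∩ A s)
        have e1 : {x | m+1 ≤ cntS A l x} ∪ ({x | m ≤ cntS A l x} ∩ A s)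
            = {x | m+1 ≤ cntS A (s :: l) x} := by
          ext x
          by_cases hx : x ∈ A s <;> simp [cntS, hx] <;> omega
        have e2 : {x | m+1 ≤ cntS A l x} ∩ ({x | m ≤ cntS A l x} ∩ A s)
            = {x | m+1 ≤ cntS A l x} ∩ A s := by
          ext x
          by_cases hx : x ∈ A s <;> simp [hx]; omega
        rw [e1, e2] at h
        calc _ = ∑ j ∈ Finset.range (m+1), P.P {x | j ≤ cntS A (s :: l) x} +
              (P.P {x | m+1 ≤ cntS A (s :: l) x} + P.P ({x | m+1 ≤ cntS A l x} ∩ A s)) := by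
                rw [add_assoc]
          _ ≤ ∑ j ∈ Finset.range (m+1), P.P {x | j ≤ cntS A (s :: l) x} +
              (P.P {x | m+1 ≤ cntS A l x} + P.P ({x | m ≤ cntS A l x} ∩ A s)) := by gcongr
          _ = (∑ j ∈ Finset.range (m+1), P.P {x | j ≤ cntS A (s :: l) x} 
              + P.P ({x | m ≤ cntS A l x} ∩ A s)) + P.P {x | m+1 ≤ cntS A l x} := by ring
          _ ≤ (∑ j ∈ Finset.range (m+1), P.P {x | j ≤ cntS A l x} + P.P (A s))
              + P.P {x | m+1 ≤ cntS A l x} := by gcongr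
          _ = _ := by ring
    calc _ ≤ ∑ j ∈ Finset.range (m+1), P.P {x | j ≤ cntS A (s :: l) x} :=
          Finset.sum_le_sum_of_subset (Finset.range_mono (by omega))
      _ ≤ _ := le_self_add.trans (key m)
      _ ≤ _ := by
        simp only [List.map_cons, List.sum_cons]
        rw [add_comm]
        gcongr
        exact ih _

theorem greedy_step {S X : Type*} [MeasurableSpace S] [MeasurableSpace X] (μ : Measure S)
    [IsProbabilityMeasure μ] (ν : Measure X) [IsFiniteMeasure ν] (f : S × X → ℝ)
    (hf : Measurable f) (h0 : ∀ z, 0 ≤ f z) (h1 : ∀ z, f z ≤ 1) (N : Set S) (hN : μ N = 0)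
    (g : X → ℝ) (hg : Measurable g) (C : ℝ) (hC : ∀ x, |g x| ≤ C) :
    ∃ s, s ∉ N ∧ ∫ x, (f (s, x) - (∫ t, f (t, x) ∂μ) + g x)^2 ∂ν ≤ ∫ x, (g x)^2 ∂ν + ν.real univ := by
  set w : X → ℝ := fun x => ∫ t, f (t, x) ∂μ with hw
  have hwm : Measurable w := 
    (StronglyMeasurable.integral_prod_left' (μ := μ) hf.stronglyMeasurable).measurable
  have hfi : ∀ x, Integrable (fun s => f (s, x)) μ := fun x =>
    Integrable.of_bound (C := 1) (hf.comp measurable_prodMk_right).aestronglyMeasurable (.of_forall fun s => by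
      rw [Real.norm_eq_abs, abs_le]; constructor <;> linarith [h0 (s,x), h1 (s,x)])
  have w0 : ∀ x, 0 ≤ w x := fun x => integral_nonneg fun s => h0 _
  have w1 : ∀ x, w x ≤ 1 := fun x => by
    have := integral_mono (hfi x) (integrable_const (1:ℝ)) (fun s => h1 (s,x))
    simpa using this
  have hbd : ∀ z : S × X, |f z - w z.2 + g z.2| ≤ C + 1 := fun z => by
    have := abs_le.1 (hC z.2)
    rw [abs_le]; constructor <;> linarith [h0 z, h1 z, w0 z.2, w1 z.2]
  have hint : Integrable (fun z : S × X => (f z - w z.2 + g z.2)^2) (μ.prod ν) := by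
    refine Integrable.of_bound (C := (C+1)^2) (by fun_prop) (.of_forall fun z => ?_)
    rw [Real.norm_eq_abs, abs_pow]
    exact pow_le_pow_left₀ (abs_nonneg _) (hbd z) 2
  obtain ⟨s, hs, hle⟩ := exists_notMem_null_le_integral hint.integral_prod_left hN
  refine ⟨s, hs, hle.trans ?_⟩
  rw [integral_integral_swap hint]
  have hg2 : Integrable (fun x => (g x)^2) ν := by
    refine Integrable.of_bound (C := C^2) (by fun_prop) (.of_forall fun z => ?_)
    rw [Real.norm_eq_abs, abs_pow]
    exact pow_le_pow_left₀ (abs_nonneg _) (hC z) 2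
  have : ∫ x, (g x)^2 ∂ν + ν.real univ = ∫ x, ((g x)^2 + 1) ∂ν := by
    rw [integral_add hg2 (integrable_const _)]; simp
  rw [this]
  apply integral_mono hint.integral_prod_right (hg2.add (integrable_const _))
  intro x
  simp only
  have hi1 : Integrable (fun s => (f (s,x) - w x) * (2 * g x)) μ :=
    ((hfi x).sub (integrable_const _)).mul_const _
  have : ∫ s, (f (s,x) - w x) * (2 * g x) ∂μ = 0 := by
    rw [integral_mul_const, integral_sub (hfi x) (integrable_const _)]
    simp [hw]
  calc ∫ s, (f (s, x) - w x + g x)^2 ∂μ ≤ ∫ s, ((f (s,x) - w x) * (2 * g x) + (g x ^2 + 1)) ∂μ := by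
        apply integral_mono
        · have hfx : Measurable fun s => f (s, x) := hf.comp measurable_prodMk_right
          refine Integrable.of_bound (C := (C+1)^2)
            (((hfx.sub_const _).add_const _).pow_const 2).aestronglyMeasurable (.of_forall fun s => ?_)
          rw [Real.norm_eq_abs, abs_pow]
          exact pow_le_pow_left₀ (abs_nonneg _) (hbd (s,x)) 2
        · exact hi1.add (integrable_const _)
        · intro s
          simp only
          nlinarith [h0 (s,x), h1 (s,x), w0 x, w1 x]
    _ = g x ^2 + 1 := by
        rw [integral_add hi1 (integrable_const _), this]; simp

open Classical in
theorem greedy {S X : Type*} [MeasurableSpace S] [MeasurableSpace X] (μ : Measure S)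
    [IsProbabilityMeasure μ] (ν : Measure X) [IsFiniteMeasure ν] (A : S → Set X)
    (hA : MeasurableSet {z : S × X | z.2 ∈ A z.1}) (N : Set S) (hN : μ N = 0) (k : ℕ) :
    ∃ l : List S, l.length = k ∧ (∀ s ∈ l, s ∉ N) ∧ 
      Measurable (fun x => (cntS A l x : ℝ) - k * μ.real {s | x ∈ A s}) ∧
      ∫ x, ((cntS A l x : ℝ) - k * μ.real {s | x ∈ A s})^2 ∂ν ≤ k * ν.real univ := by
  have hw : ∀ x, ∫ t, indicator {z : S × X | z.2 ∈ A z.1} (1 : S × X → ℝ) (t, x) ∂μ 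
      = μ.real {s | x ∈ A s} := by
    intro x
    rw [← integral_indicator_one]
    · rfl
    · exact measurable_prodMk_right hA
  have hfm : Measurable (indicator {z : S × X | z.2 ∈ A z.1} (1 : S × X → ℝ)) :=
    measurable_one.indicator hA
  have hwm : Measurable fun x => μ.real {s | x ∈ A s} := by
    simp_rw [← hw]
    exact (StronglyMeasurable.integral_prod_left' (μ := μ) hfm.stronglyMeasurable).measurable
  induction k with
  | zero => exact ⟨[], by simp [cntS]⟩
  | succ k ih =>
    obtain ⟨l, hl, hlN, hm, hi⟩ := ih
    have hc : ∀ x, cntS A l x ≤ k := by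
      intro x
      have := List.sum_le_card_nsmul (l.map (fun s => if x ∈ A s then 1 else 0)) 1 (by
        intro y hy
        simp only [List.mem_map] at hy
        obtain ⟨s, _, rfl⟩ := hy
        split_ifs <;> simp)
      simpa [cntS, hl] using this
    obtain ⟨s, hsN, hs⟩ := greedy_step μ ν _ hfm
      (fun z => indicator_nonneg (by simp) z) (fun z => indicator_le_self' (by simp) z) N hN _ hm k (by
        intro x
        have a := hc x
        have b : (0:ℝ) ≤ μ.real {s | x ∈ A s} := measureReal_nonneg
        have b' : μ.real {s | x ∈ A s} ≤ 1 := measureReal_le_one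
        have a' : (cntS A l x : ℝ) ≤ k := by exact_mod_cast a
        have : (0:ℝ) ≤ cntS A l x := by positivity
        have : (0:ℝ) ≤ k := by positivity
        rw [abs_le]; constructor <;> nlinarith)
    have e : ∀ x, (cntS A (s :: l) x : ℝ) - (k+1 : ℕ) * μ.real {s | x ∈ A s} = 
      indicator {z : S × X | z.2 ∈ A z.1} (1 : S × X → ℝ) (s, x) - 
      (∫ t, indicator {z : S × X | z.2 ∈ A z.1} (1 : S × X → ℝ) (t, x) ∂μ) + 
      ((cntS A l x : ℝ) - k * μ.real {s | x ∈ A s}) := by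
      intro x
      rw [hw]
      by_cases hx : x ∈ A s <;> simp [cntS, hx, indicator] <;> ring
    refine ⟨s :: l, by simp [hl], ?_, ?_, ?_⟩
    · intro t ht
      rcases List.mem_cons.1 ht with rfl | ht
      · exact hsN
      · exact hlN t ht
    · simp_rw [e, hw]
      exact ((hfm.comp measurable_prodMk_left).sub hwm).add hm
    · simp_rw [e]
      refine hs.trans ?_
      push_cast
      linarith

theorem transl_pre {d : ℕ} (P : GenPerimeter d) (E : Set (Cyl d)) (s : Cyl d) :
    P.P {x | x + s ∈ E} = P.P E := by
  have : ∀ i, ∃ r : ℝ, (r : AddCircle (1:ℝ)) = - s.1 i := fun i => 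
    QuotientAddGroup.mk_surjective _
  choose r hr using this
  rw [← P.transl_inv E (r, -s.2)]
  congr 1
  ext x
  simp only [mem_ofPred_eq, mem_image]
  constructor
  · intro h
    refine ⟨_, h, ?_⟩
    ext i <;> simp [translCyl, hr]
  · rintro ⟨y, hy, rfl⟩
    convert hy
    ext i <;> simp [translCyl, hr]

theorem halfspace_eq {d : ℕ} (P : GenPerimeter d) (a : ℝ) :
    P.P (halfspace d a) = P.P (halfspace d 0) := by
  rw [← transl_pre P (halfspace d a) (0, a)]
  congr 1
  ext x; simp [halfspace]

theorem cyl_inv (d : ℕ) : (volume : Measure (Cyl d)).IsAddLeftInvariant := by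
  have h1 : (volume : Measure (Torus d)).IsAddLeftInvariant := by
    rw [volume_pi]; infer_instance
  have : SFinite (volume : Measure (Torus d)) := by
    rw [volume_pi]; infer_instance
  rw [Measure.volume_eq_prod]
  infer_instance

theorem delta_lemma {d : ℕ} (P : GenPerimeter d) (c : ℝ≥0∞) (hc : c < P.P (halfspace d 0)) :
    ∃ δ : ℝ, 0 < δ ∧ ∀ (a : ℝ) (G : Set (Cyl d)), 
      volume (symmDiff G (halfspace d a)) ≤ ENNReal.ofReal δ → c ≤ P.P G := by
  by_contra! h
  choose a G hG hPG using fun n : ℕ => h (1 / ((n:ℝ)+1)) (by positivity)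
  have := P.lsc (fun n => {x | x + (0, a n) ∈ G n}) (halfspace d 0) (by
    intro R hR
    have h0 : Tendsto (fun n : ℕ => ENNReal.ofReal (1 / ((n:ℝ)+1))) atTop (nhds 0) := by
      have := ENNReal.tendsto_ofReal (tendsto_one_div_add_atTop_nhds_zero_nat (𝕜 := ℝ))
      simpa using this
    refine tendsto_of_tendsto_of_tendsto_of_le_of_le tendsto_const_nhds h0 (fun _ => zero_le) ?_
    intro n
    refine (measure_mono inter_subset_left).trans (le_trans (le_of_eq ?_) (hG n))
    haveI := cyl_inv d
    rw [← measure_preimage_add volume (0, a n) (symmDiff (G n) _)]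
    congr 1
    ext x; simp [halfspace, mem_symmDiff, add_comm])
  have h2 : liminf (fun n => P.P {x | x + (0, a n) ∈ G n}) atTop ≤ c := by
    simp_rw [transl_pre]
    refine (liminf_le_liminf (v := fun _ => c) (.of_forall fun n => (hPG n).le)).trans ?_
    simp
  exact absurd (this.trans h2) (not_le.2 hc)

theorem vol_slab (d : ℕ) (a b : ℝ) : 
    volume {x : Cyl d | a ≤ x.2 ∧ x.2 ≤ b} = ENNReal.ofReal (b - a) := by
  have : {x : Cyl d | a ≤ x.2 ∧ x.2 ≤ b} = univ ×ˢ Icc a b := by ext; simp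
  rw [this, Measure.volume_eq_prod, Measure.prod_prod]
  have h1 : (volume : Measure (Torus d)) univ = 1 := by
    rw [volume_pi, ← Set.pi_univ univ, Measure.pi_pi]; simp
  simp [h1]

theorem meas_slab (d : ℕ) (a b : ℝ) : 
    MeasurableSet {x : Cyl d | a ≤ x.2 ∧ x.2 ≤ b} := by
  have : {x : Cyl d | a ≤ x.2 ∧ x.2 ≤ b} = univ ×ˢ Icc a b := by ext; simp
  rw [this]
  exact MeasurableSet.univ.prod measurableSet_Icc

/-- slab -/
def slab2 (d : ℕ) (a b : ℝ) : Set (Cyl d) := {x | a ≤ x.2 ∧ x.2 ≤ b}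

theorem slab2_real (d : ℕ) (a b : ℝ) (h : a ≤ b) : volume.real (slab2 d a b) = b - a := by
  rw [Measure.real, slab2, vol_slab, ENNReal.toReal_ofReal (by linarith)]

theorem slab2_ne (d : ℕ) (a b : ℝ) : volume (slab2 d a b) ≠ ⊤ := by
  rw [slab2, vol_slab]; simp

/-- window volume -/
def Phi (d : ℕ) (F : Set (Cyl d)) (N r : ℝ) : ℝ := volume.real (F ∩ slab2 d (r - N) r)

theorem inter_ne (d : ℕ) (F : Set (Cyl d)) (a b : ℝ) : volume (F ∩ slab2 d a b) ≠ ⊤ :=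
  measure_ne_top_of_subset inter_subset_right (slab2_ne d a b)

theorem Phi_compl {d : ℕ} {F : Set (Cyl d)} (hF : MeasurableSet F) (N r : ℝ) (hN : 0 ≤ N) :
    Phi d F N r = N - volume.real (Fᶜ ∩ slab2 d (r - N) r) := by
  have := measureReal_inter_add_sdiff (μ := volume) (s := slab2 d (r - N) r) hF (slab2_ne d _ _)
  rw [slab2_real d _ _ (by linarith)] at this
  rw [Phi, inter_comm, inter_comm Fᶜ, ← diff_eq]
  linarith

theorem Phi_anti {d : ℕ} {F : Set (Cyl d)} {R N : ℝ} (hF : F ∈ MR d R) (hN : 2 * R ≤ N)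
    (hR : 0 < R) {r r' : ℝ} (h : r ≤ r') : Phi d F N r' ≤ Phi d F N r := by
  obtain ⟨hm, hl, hu⟩ := hF
  have A : ∀ r r', r ≤ r' → r' ≤ N - R → Phi d F N r' ≤ Phi d F N r := by
    intro r r' h h'
    rw [Phi_compl hm _ _ (by linarith), Phi_compl hm _ _ (by linarith)]
    have : volume.real (Fᶜ ∩ slab2 d (r - N) r) ≤ volume.real (Fᶜ ∩ slab2 d (r' - N) r') := by
      apply measureReal_mono _ (inter_ne _ _ _ _)
      rintro x ⟨hx, hx1, hx2⟩
      refine ⟨hx, ?_, by linarith⟩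
      by_contra hc
      exact hx (hl (show x.2 < -R by linarith))
    linarith
  have B : ∀ r r', r ≤ r' → R ≤ r → Phi d F N r' ≤ Phi d F N r := by
    intro r r' h h'
    apply measureReal_mono _ (inter_ne _ _ _ _)
    rintro x ⟨hx, hx1, hx2⟩
    have : x.2 < R := hu hx
    exact ⟨hx, by linarith, by linarith⟩
  rcases le_total r' (N - R) with h1 | h1
  · exact A _ _ h h1
  rcases le_total R r with h2 | h2
  · exact B _ _ h h2
  · exact (B R r' (by linarith) le_rfl).trans (A r R h2 (by linarith))

theorem Phi_lin {d : ℕ} {F : Set (Cyl d)} {R N : ℝ} (hF : F ∈ MR d R)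
    (hR : 0 < R) {r : ℝ} (h : R ≤ r) (h' : r ≤ N - R) : Phi d F N r = Phi d F N R - (r - R) := by
  obtain ⟨hm, hl, hu⟩ := hF
  apply le_antisymm
  · -- disjoint union
    have hd : Disjoint (F ∩ slab2 d (r - N) r) {x : Cyl d | R - N ≤ x.2 ∧ x.2 < r - N} := by
      rw [Set.disjoint_left]
      rintro x ⟨hx, hx1, hx2⟩ ⟨hy1, hy2⟩
      linarith
    have hms : MeasurableSet {x : Cyl d | R - N ≤ x.2 ∧ x.2 < r - N} :=
      (measurableSet_Ico (a := R - N) (b := r - N)).preimage measurable_snd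
    have hv : r - R ≤ volume.real {x : Cyl d | R - N ≤ x.2 ∧ x.2 < r - N} := by
      have hsub : slab2 d (R - N) (r - N) ⊆ {x : Cyl d | R - N ≤ x.2 ∧ x.2 < r - N} ∪ slab2 d (r - N) (r - N) := by
        rintro x ⟨h1, h2⟩
        rcases lt_or_ge x.2 (r - N) with h3 | h3
        · exact Or.inl ⟨h1, h3⟩
        · exact Or.inr ⟨h3, h2⟩
      have hne : volume {x : Cyl d | R - N ≤ x.2 ∧ x.2 < r - N} ≠ ⊤ :=
        measure_ne_top_of_subset
          (show {x : Cyl d | R - N ≤ x.2 ∧ x.2 < r - N} ⊆ slab2 d (R - N) (r - N) from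
            fun x hx => And.intro hx.1 (le_of_lt hx.2)) (slab2_ne d (R - N) (r - N))
      have := (measureReal_mono hsub (measure_union_ne_top hne (slab2_ne _ _ _))).trans (measureReal_union_le _ _)
      rw [slab2_real d _ _ (by linarith), slab2_real d _ _ le_rfl] at this
      linarith
    have hne : volume {x : Cyl d | R - N ≤ x.2 ∧ x.2 < r - N} ≠ ⊤ :=
        measure_ne_top_of_subset
          (show {x : Cyl d | R - N ≤ x.2 ∧ x.2 < r - N} ⊆ slab2 d (R - N) (r - N) from
            fun x hx => And.intro hx.1 (le_of_lt hx.2)) (slab2_ne d (R - N) (r - N))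
    have e := measureReal_union hd hms (inter_ne _ _ _ _) hne
    have hsub : (F ∩ slab2 d (r - N) r) ∪ {x : Cyl d | R - N ≤ x.2 ∧ x.2 < r - N} ⊆ F ∩ slab2 d (R - N) R := by
      rintro x (⟨hx, hx1, hx2⟩ | ⟨hx1, hx2⟩)
      · have : x.2 < R := hu hx
        exact ⟨hx, by linarith, by linarith⟩
      · exact ⟨hl (show x.2 < -R by linarith), by linarith, by linarith⟩
    have := measureReal_mono hsub (inter_ne d F (R - N) R)
    simp only [Phi]
    linarith
  · have hsub : F ∩ slab2 d (R - N) R ⊆ slab2 d (R - N) (r - N) ∪ (F ∩ slab2 d (r - N) r) := by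
      rintro x ⟨hx, hx1, hx2⟩
      rcases lt_or_ge x.2 (r - N) with h3 | h3
      · exact Or.inl ⟨hx1, h3.le⟩
      · exact Or.inr ⟨hx, h3, by linarith⟩
    have := (measureReal_mono hsub (measure_union_ne_top (slab2_ne _ _ _) (inter_ne _ _ _ _))).trans
      (measureReal_union_le _ _)
    rw [slab2_real d _ _ (by linarith)] at this
    simp only [Phi]
    linarith

theorem Phi_R_ge {d : ℕ} {F : Set (Cyl d)} {R N : ℝ} (hF : F ∈ MR d R) (hN : 2 * R ≤ N)
    (hR : 0 < R) : N - 2 * R ≤ Phi d F N R := by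
  have := Phi_lin hF hR (r := N - R) (by linarith) le_rfl
  have h2 : 0 ≤ Phi d F N (N - R) := measureReal_nonneg
  linarith

theorem Phi_window {d : ℕ} {F : Set (Cyl d)} {N : ℝ} (hN : 0 < N) (x : Cyl d) :
    (ProbabilityTheory.cond volume (slab2 d (-N) 0)).real {s | x + s ∈ F} = Phi d F N x.2 / N := by
  have hms : MeasurableSet (slab2 d (-N) 0) := meas_slab d _ _
  rw [Measure.real, ProbabilityTheory.cond_apply hms, ENNReal.toReal_mul, ENNReal.toReal_inv]
  change (volume.real (slab2 d (-N) 0))⁻¹ * _ = _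
  rw [slab2_real d _ _ (by linarith)]
  haveI := cyl_inv d
  have : slab2 d (-N) 0 ∩ {s | x + s ∈ F} = (fun s => x + s) ⁻¹' (F ∩ slab2 d (x.2 - N) x.2) := by
    ext s
    simp only [slab2, mem_inter_iff, mem_preimage, mem_ofPred_eq, Prod.snd_add]
    constructor
    · rintro ⟨⟨h1, h2⟩, h3⟩
      exact ⟨h3, by linarith, by linarith⟩
    · rintro ⟨h3, h1, h2⟩
      exact ⟨⟨by linarith, by linarith⟩, h3⟩
  rw [this, Phi, measure_preimage_add, Measure.real]
  rw [sub_neg_eq_add, zero_add]; ring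

open Classical in
theorem cnt_all {S X : Type*} (A : S → Set X) (l : List S) (x : X) (h : ∀ s ∈ l, x ∈ A s) :
    cntS A l x = l.length := by
  induction l with
  | nil => simp [cntS]
  | cons s l ih =>
    have := ih (fun t ht => h t (List.mem_cons_of_mem _ ht))
    simp only [cntS] at this
    simp [cntS, this, h s]; ring

open Classical in
theorem cnt_none {S X : Type*} (A : S → Set X) (l : List S) (x : X) (h : ∀ s ∈ l, x ∉ A s) :
    cntS A l x = 0 := by
  induction l with
  | nil => simp [cntS]
  | cons s l ih =>
    have := ih (fun t ht => h t (List.mem_cons_of_mem _ ht))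
    simp only [cntS] at this
    simp [cntS, this, h s]

/-- level sets of the count are close to halfspaces -/
theorem level_close {d : ℕ} {F : Set (Cyl d)} {R N u : ℝ} (hF : F ∈ MR d R) (hR : 0 < R) (hu : 0 < u)
    (hN : 2 * R + 2 * u < N) (k : ℕ) (hk : 0 < k) :
    ∃ l : List (Cyl d), l.length = k ∧ ∀ j : ℕ, 
      (k * (Phi d F N R - N + 2 * R + u) ≤ j * N) → (j * N ≤ k * (Phi d F N R - u)) →
      ∃ a : ℝ, volume (symmDiff {x | j ≤ cntS (fun s => {x | x + s ∈ F}) l x} (halfspace d a)) ≤ 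
        ENNReal.ofReal (2 * u + (N + 2 * R) * N^2 / (k * u^2)) := by
  have hN0 : 0 < N := by linarith
  have hkr : (0:ℝ) < k := by exact_mod_cast hk
  have hvD : volume (slab2 d (-N) 0) ≠ 0 := by
    rw [slab2, vol_slab]; simpa using hN0
  haveI := ProbabilityTheory.cond_isProbabilityMeasure_of_finite hvD (slab2_ne d (-N) 0)
  haveI : IsFiniteMeasure (volume.restrict (slab2 d (-R) (N+R))) :=
    ⟨by simpa using (slab2_ne d (-R) (N+R)).lt_top⟩
  have hmeasA : MeasurableSet {z : Cyl d × Cyl d | z.2 ∈ {x | x + z.1 ∈ F}} := by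
    have : Measurable fun z : Cyl d × Cyl d => z.2 + z.1 := measurable_snd.add measurable_fst
    exact this hF.1
  obtain ⟨l, hl, hlN, hdm, hint⟩ := greedy (ProbabilityTheory.cond volume (slab2 d (-N) 0))
    (volume.restrict (slab2 d (-R) (N+R))) (fun s => {x : Cyl d | x + s ∈ F}) hmeasA
    (slab2 d (-N) 0)ᶜ (by
      rw [ProbabilityTheory.cond_apply (show MeasurableSet (slab2 d (-N) 0) from meas_slab d _ _)]; simp) k
  refine ⟨l, hl, fun j hj1 hj2 => ?_⟩
  have hw : ∀ x : Cyl d, (ProbabilityTheory.cond volume (slab2 d (-N) 0)).real 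
      {s | x ∈ (fun s => {x : Cyl d | x + s ∈ F}) s} = Phi d F N x.2 / N := fun x => Phi_window hN0 x
  simp only [hw] at hdm hint
  set c : Cyl d → ℕ := cntS (fun s => {x : Cyl d | x + s ∈ F}) l with hc
  set dev : Cyl d → ℝ := fun x => (c x : ℝ) - k * (Phi d F N x.2 / N) with hdev
  set ν := volume.restrict (slab2 d (-R) (N+R)) with hν
  have hνu : ν.real univ = N + 2 * R := by
    rw [hν, measureReal_restrict_apply_univ, slab2_real d _ _ (by linarith)]; ring
  rw [hνu] at hint
  have hcle : ∀ x, (c x : ℝ) ≤ k := by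
    classical
    intro x
    have := List.sum_le_card_nsmul (l.map (fun s => if x ∈ {x : Cyl d | x + s ∈ F} then 1 else 0)) 1 (by
      intro y hy
      simp only [List.mem_map] at hy
      obtain ⟨s, _, rfl⟩ := hy
      split_ifs <;> simp)
    have h2 : c x ≤ k := by
      simpa [hc, cntS, hl] using this
    exact_mod_cast h2
  have hPhi : ∀ r, 0 ≤ Phi d F N r / N ∧ Phi d F N r / N ≤ 1 := by
    intro r
    refine ⟨div_nonneg measureReal_nonneg hN0.le, ?_⟩
    rw [div_le_one hN0, Phi_compl hF.1 _ _ hN0.le]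
    linarith [measureReal_nonneg (μ := volume) (s := Fᶜ ∩ slab2 d (r - N) r)]
  have hdi : Integrable (fun x => dev x ^ 2) ν := by
    refine Integrable.of_bound (C := (k:ℝ)^2) (hdm.pow_const 2).aestronglyMeasurable (.of_forall fun x => ?_)
    rw [Real.norm_eq_abs, abs_pow]
    refine pow_le_pow_left₀ (abs_nonneg _) ?_ 2
    have h1 := hcle x
    have h2 := hPhi x.2
    have : (0:ℝ) ≤ c x := by positivity
    rw [abs_le]; constructor <;> simp only [hdev] <;> nlinarith
  have cheb : (k * u / N)^2 * ν.real {x | (k * u / N)^2 ≤ dev x ^ 2} ≤ k * (N + 2 * R) :=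
    (mul_meas_ge_le_integral_of_nonneg (.of_forall fun x => sq_nonneg _) hdi _).trans hint
  have hcheb : ν.real {x | (k * u / N)^2 ≤ dev x ^ 2} ≤ (N + 2 * R) * N^2 / (k * u^2) := by
    rw [le_div_iff₀ (by positivity)]
    have e : (k * u / N)^2 = k * (k * u^2) / N^2 := by ring
    rw [e, div_mul_eq_mul_div, div_le_iff₀ (by positivity)] at cheb
    have : (k:ℝ) * (ν.real {x | (k * u / N)^2 ≤ dev x ^ 2} * (k * u^2)) ≤ k * ((N + 2 * R) * N^2) := by
      rw [e]; linarith
    exact le_of_mul_le_mul_left this hkr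
  set L := Phi d F N R with hL
  have hLle : L ≤ N := by have := (hPhi R).2; rwa [div_le_one hN0] at this
  have hLge : N - 2 * R ≤ L := Phi_R_ge hF (by linarith) hR
  -- the threshold
  have hτ : ∃ τ : ℝ, (j:ℝ) = k * (τ / N) ∧ L - N + 2 * R + u ≤ τ ∧ τ ≤ L - u := by
    refine ⟨j * N / k, by field_simp, ?_, ?_⟩
    · rw [le_div_iff₀ hkr]; linarith
    · rw [div_le_iff₀ hkr]; linarith
  obtain ⟨τ, hjτ, hτ1, hτ2⟩ := hτ
  have hjpos : 0 < j := by
    have : (0:ℝ) < j := by rw [hjτ]; have : 0 < τ := by linarith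
                           positivity
    exact_mod_cast this
  have hjk : j ≤ k := by
    have : (j:ℝ) ≤ k := by
      rw [hjτ]
      have : τ / N ≤ 1 := by rw [div_le_one hN0]; linarith
      nlinarith
    exact_mod_cast this
  set a := R + L - τ with ha
  refine ⟨a, ?_⟩
  have hs1 : ∀ s ∈ l, -N ≤ s.2 ∧ s.2 ≤ 0 := fun s hs => by
    simpa [slab2] using hlN s hs
  have hsub : symmDiff {x | j ≤ c x} (halfspace d a) ⊆ slab2 d (a - u) (a + u) ∪
      ({x | (k * u / N)^2 ≤ dev x ^ 2} ∩ slab2 d (-R) (N + R)) := by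
    intro x hx
    by_cases hx1 : a - u ≤ x.2 ∧ x.2 ≤ a + u
    · exact Or.inl hx1
    right
    rcases hx with ⟨hxc, hxa⟩ | ⟨hxa, hxc⟩
    · have hxa' : a ≤ x.2 := not_lt.1 hxa
      have hxu : a + u < x.2 := by
        by_contra h; exact hx1 ⟨by linarith, by linarith⟩
      have hxc' : (j:ℝ) ≤ c x := by exact_mod_cast hxc
      constructor
      · have h1 := Phi_anti (N := N) hF (by linarith) hR hxu.le
        rw [Phi_lin (r := a + u) hF hR (by linarith) (by linarith)] at h1
        have h2 : Phi d F N x.2 / N ≤ τ / N - u / N := by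
          rw [← sub_div]; apply div_le_div_of_nonneg_right _ hN0.le; linarith
        show _ ≤ dev x ^ 2
        apply pow_le_pow_left₀ (by positivity)
        have h3 := mul_le_mul_of_nonneg_left h2 hkr.le
        rw [mul_sub] at h3
        simp only [hdev]
        rw [mul_div_assoc]
        linarith
      · refine ⟨by linarith, ?_⟩
        by_contra h
        have : c x = 0 := cnt_none _ _ _ (by
          intro s hs hmem
          have : (x + s).2 < R := hF.2.2 hmem
          rw [Prod.snd_add] at this
          linarith [(hs1 s hs).1])
        have hxc2 : j ≤ c x := hxc
        omega
    · have hxa' : x.2 < a := hxa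
      have hxu : x.2 < a - u := by
        by_contra h; exact hx1 ⟨by linarith, by linarith⟩
      have hxc1 : c x < j := not_le.1 hxc
      have hxc' : (c x : ℝ) < j := by exact_mod_cast hxc1
      constructor
      · have h1 := Phi_anti (N := N) hF (by linarith) hR hxu.le
        rw [Phi_lin hF hR (by linarith) (by linarith)] at h1
        have h2 : τ / N + u / N ≤ Phi d F N x.2 / N := by
          rw [← add_div]; apply div_le_div_of_nonneg_right _ hN0.le; linarith
        show _ ≤ dev x ^ 2
        rw [← neg_sq (dev x)]
        apply pow_le_pow_left₀ (by positivity)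
        have h3 := mul_le_mul_of_nonneg_left h2 hkr.le
        rw [mul_add] at h3
        simp only [hdev]
        rw [mul_div_assoc]
        linarith
      · refine ⟨?_, by linarith⟩
        by_contra h
        have : c x = l.length := cnt_all _ _ _ (by
          intro s hs
          apply hF.2.1
          show (x + s).2 < -R
          rw [Prod.snd_add]
          linarith [(hs1 s hs).2])
        omega
  refine (measure_mono hsub).trans ((measure_union_le _ _).trans ?_)
  have hq : 0 ≤ (N + 2 * R) * N^2 / (k * u^2) := by positivity
  rw [ENNReal.ofReal_add (by positivity) hq]
  gcongr
  · rw [slab2, vol_slab]; apply le_of_eq; congr 1; ring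
  · rw [← Measure.restrict_apply' (show MeasurableSet (slab2 d (-R) (N + R)) from meas_slab d _ _)]
    rw [ENNReal.le_ofReal_iff_toReal_le (measure_ne_top ν _) hq]
    exact hcheb

theorem main_ineq {d : ℕ} (P : GenPerimeter d) {F : Set (Cyl d)} {R : ℝ} (hF : F ∈ MR d R) (hR : 0 < R) :
    P.P (halfspace d 0) ≤ P.P F := by
  by_contra! hlt
  obtain ⟨c, hc1, hc2⟩ := ENNReal.lt_iff_exists_nnreal_btwn.1 hlt
  have hpt : P.P F ≠ ⊤ := hlt.ne_top
  set p := (P.P F).toReal with hp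
  have hp0 : 0 ≤ p := ENNReal.toReal_nonneg
  have hpc : p < c := by
    have := (ENNReal.toReal_lt_toReal hpt ENNReal.coe_ne_top).2 hc1
    simpa using this
  obtain ⟨δ, hδ, hd⟩ := delta_lemma P c hc2
  set u := δ / 4 with hu
  have hu0 : 0 < u := by positivity
  obtain ⟨N, hN1, hN2⟩ : ∃ N : ℝ, 2 * R + 2 * u < N ∧ p * N < c * (N - 2 * R - 2 * u) := by
    refine ⟨max (2 * R + 2 * u + 1) (c * (2 * R + 2 * u) / (c - p) + 1), ?_, ?_⟩
    · exact lt_of_lt_of_le (by linarith) (le_max_left _ _)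
    · have h := lt_of_lt_of_le (lt_add_one (c * (2 * R + 2 * u) / (c - p))) (le_max_right (2 * R + 2 * u + 1) _)
      rw [div_lt_iff₀ (by linarith)] at h
      linarith
  have hN0 : 0 < N := by linarith
  obtain ⟨k, hk⟩ := exists_nat_gt (max ((N + 2 * R) * N^2 / (2 * u * u^2)) (c * N / (c * (N - 2 * R - 2 * u) - p * N)))
  have hk1 := (le_max_left _ _).trans_lt hk
  have hk2 := (le_max_right _ _).trans_lt hk
  have hkr : (0:ℝ) < k := lt_of_le_of_lt (by positivity) hk1
  rw [div_lt_iff₀ (by positivity)] at hk1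
  rw [div_lt_iff₀ (by linarith)] at hk2
  obtain ⟨l, hl, hlev⟩ := level_close hF hR hu0 hN1 k (by exact_mod_cast hkr)
  set L := Phi d F N R with hL
  have hLge : N - 2 * R ≤ L := Phi_R_ge hF (by linarith) hR
  set A := k * (L - N + 2 * R + u) / N with hA
  set B := k * (L - u) / N with hB
  have hA0 : 0 ≤ A := by
    have : 0 ≤ L - N + 2 * R + u := by linarith
    positivity
  have hB0 : 0 ≤ B := by
    have : 0 ≤ L - u := by linarith
    positivity
  have hun := uncross P (fun s => {x : Cyl d | x + s ∈ F}) l (⌊B⌋₊ + 1)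
  have hs : (l.map (fun s => P.P {x : Cyl d | x + s ∈ F})).sum = k * P.P F := by
    simp [transl_pre, hl]
  rw [hs] at hun
  have hlow : ((Finset.Icc ⌈A⌉₊ ⌊B⌋₊).card : ℝ≥0∞) * c ≤ 
      ∑ j ∈ Finset.range (⌊B⌋₊ + 1), P.P {x | j ≤ cntS (fun s => {x : Cyl d | x + s ∈ F}) l x} := by
    calc ((Finset.Icc ⌈A⌉₊ ⌊B⌋₊).card : ℝ≥0∞) * c = ∑ j ∈ Finset.Icc ⌈A⌉₊ ⌊B⌋₊, (c : ℝ≥0∞) := by simp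
      _ ≤ ∑ j ∈ Finset.Icc ⌈A⌉₊ ⌊B⌋₊, P.P {x | j ≤ cntS (fun s => {x : Cyl d | x + s ∈ F}) l x} := by
        apply Finset.sum_le_sum
        intro j hj
        rw [Finset.mem_Icc] at hj
        have h1 : A ≤ j := Nat.ceil_le.1 hj.1
        have h2 : (j:ℝ) ≤ B := (Nat.le_floor_iff hB0).1 hj.2
        rw [hA, div_le_iff₀ hN0] at h1
        rw [hB, le_div_iff₀ hN0] at h2
        obtain ⟨a, ha⟩ := hlev j h1 h2
        refine hd a _ (ha.trans (ENNReal.ofReal_le_ofReal ?_))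
        have : (N + 2 * R) * N^2 / (k * u^2) ≤ 2 * u := by
          rw [div_le_iff₀ (by positivity)]; linarith
        linarith
      _ ≤ _ := Finset.sum_le_sum_of_subset (by
        intro j hj
        simp only [Finset.mem_Icc, Finset.mem_range] at *
        omega)
  have hfin := hlow.trans hun
  have hfin2 := ENNReal.toReal_mono (ENNReal.mul_ne_top (ENNReal.natCast_ne_top k) hpt) hfin
  simp only [ENNReal.toReal_mul, ENNReal.toReal_natCast, ENNReal.coe_toReal, ← hp] at hfin2
  have hcard : B - A - 1 ≤ ((Finset.Icc ⌈A⌉₊ ⌊B⌋₊).card : ℝ) := by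
    have h1 := Nat.ceil_lt_add_one hA0
    have h2 := Nat.lt_floor_add_one B
    have h3 : ⌊B⌋₊ + 1 ≤ (Finset.Icc ⌈A⌉₊ ⌊B⌋₊).card + ⌈A⌉₊ := by
      rw [Nat.card_Icc]; omega
    have h3' : ((⌊B⌋₊ : ℝ) + 1) ≤ (Finset.Icc ⌈A⌉₊ ⌊B⌋₊).card + ⌈A⌉₊ := by exact_mod_cast h3
    linarith
  have hBA : B - A - 1 = (k * (N - 2 * R - 2 * u) - N) / N := by
    rw [hA, hB]; field_simp; ring
  have h5 : (B - A - 1) * c ≤ k * p := (mul_le_mul_of_nonneg_right hcard c.2).trans hfin2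
  rw [hBA, div_mul_eq_mul_div, div_le_iff₀ hN0] at h5
  linarith

/-- Periodic halfspaces minimize any generalized perimeter in `𝔐_R`. -/
theorem halfspace_minimizes (d : ℕ) (hd : 2 ≤ d) (P : GenPerimeter d) (R : ℝ) (hR : 0 < R)
    (lam : ℝ) (hlam : lam ∈ Set.Ioo (-R) R) :
    ∀ F ∈ MR d R, P.P (halfspace d lam) ≤ P.P F := by
  intro F hF
  rw [halfspace_eq]
  exact main_ineq P hF hR
end
end

section
/- Let 𝒫 be a generalized perimeter, R > 0, h > 0, and E ∈ 𝔐_R with 𝒫(E) < +∞. Then the functional 𝓕̃_h(E,·) admits a minimizer in 𝔐_R; moreover there exist minimizers T_h^−[E], T_h^+[E] ∈ 𝔐_R that are minimal, respectively maximal, with respect to inclusion: for every minimizer F of 𝓕̃_h(E,·) in 𝔐_R one has |T_h^−[E] \ F| = 0 and |F \ T_h^+[E]| = 0. -/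
open MeasureTheory Filter Set
open scoped ENNReal

noncomputable section

theorem aux_liminf_add (u v : ℕ → ℝ≥0∞) :
    liminf u atTop + liminf v atTop ≤ liminf (fun n => u n + v n) atTop := by
  simp only [liminf_eq_iSup_iInf_of_nat]
  rw [ENNReal.iSup_add_iSup_of_monotone]
  · refine iSup_mono fun n => le_iInf₂ fun i hi => ?_
    exact add_le_add (iInf₂_le i hi) (iInf₂_le i hi)
  · exact fun a b hab => le_iInf₂ fun i hi => iInf₂_le i (hab.trans hi)
  · exact fun a b hab => le_iInf₂ fun i hi => iInf₂_le i (hab.trans hi)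

theorem aux_union {α : Type*} (M : Set (Set α)) (J : Set α → ℝ≥0∞) (m : ℝ≥0∞) (hm : m ≠ ⊤)
    (hmJ : ∀ F ∈ M, m ≤ J F)
    (hU2 : ∀ F ∈ M, ∀ G ∈ M, F ∪ G ∈ M) (hI2 : ∀ F ∈ M, ∀ G ∈ M, F ∩ G ∈ M)
    (hsub : ∀ F ∈ M, ∀ G ∈ M, J (F ∪ G) + J (F ∩ G) ≤ J F + J G)
    (hmono : ∀ F : ℕ → Set α, (∀ n, F n ∈ M) → Monotone F →
      J (⋃ n, F n) ≤ liminf (fun n => J (F n)) atTop)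
    (F : ℕ → Set α) (hF : ∀ n, F n ∈ M) (ε : ℕ → ℝ≥0∞) (hε : ∀ n, J (F n) ≤ m + ε n) :
    J (⋃ n, F n) ≤ m + ∑' n, ε n := by
  have key : ∀ N, partialSups F N ∈ M ∧
      J (partialSups F N) ≤ m + ∑ k ∈ Finset.range (N+1), ε k := by
    intro N
    induction N with
    | zero => simpa using ⟨hF 0, hε 0⟩
    | succ N ih =>
      obtain ⟨h1, h2⟩ := ih
      have e : partialSups F (N+1) = partialSups F N ∪ F (N+1) := by
        rw [partialSups_add_one]; rfl
      rw [e]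
      refine ⟨hU2 _ h1 _ (hF _), ?_⟩
      have h3 := hsub _ h1 _ (hF (N+1))
      have h4 := hmJ _ (hI2 _ h1 _ (hF (N+1)))
      rw [Finset.sum_range_succ]
      set S := ∑ k ∈ Finset.range (N+1), ε k
      have h5 : J (partialSups F N ∪ F (N+1)) + m ≤ (m + (S + ε (N+1))) + m := by
        calc _ ≤ _ := add_le_add le_rfl h4
          _ ≤ _ := h3
          _ ≤ (m + S) + (m + ε (N+1)) := add_le_add h2 (hε _)
          _ = _ := by ring
      exact (ENNReal.add_le_add_iff_right hm).1 h5
  have e : ⋃ n, F n = ⋃ n, partialSups F n := by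
    apply subset_antisymm
    · exact iUnion_mono fun n => le_partialSups F n
    · refine iUnion_subset fun n => ?_
      exact partialSups_le F n _ fun k _ => subset_iUnion F k
  rw [e]
  refine (hmono _ (fun n => (key n).1) (partialSups F).monotone).trans ?_
  have : liminf (fun n => J (partialSups F n)) atTop ≤
      liminf (fun _ : ℕ => m + ∑' n, ε n) atTop := by
    refine liminf_le_liminf (Eventually.of_forall fun n => ?_)
    exact (key n).2.trans (add_le_add le_rfl (ENNReal.sum_le_tsum _))
  simpa using this

theorem aux_exists {α : Type*} (M : Set (Set α)) (J : Set α → ℝ≥0∞)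
    (hne : ∃ F ∈ M, J F < ⊤)
    (hU : ∀ F : ℕ → Set α, (∀ n, F n ∈ M) → ⋃ n, F n ∈ M)
    (hI : ∀ F : ℕ → Set α, (∀ n, F n ∈ M) → ⋂ n, F n ∈ M)
    (hU2 : ∀ F ∈ M, ∀ G ∈ M, F ∪ G ∈ M) (hI2 : ∀ F ∈ M, ∀ G ∈ M, F ∩ G ∈ M)
    (hsub : ∀ F ∈ M, ∀ G ∈ M, J (F ∪ G) + J (F ∩ G) ≤ J F + J G)
    (hmono : ∀ F : ℕ → Set α, (∀ n, F n ∈ M) → Monotone F →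
      J (⋃ n, F n) ≤ liminf (fun n => J (F n)) atTop)
    (hanti : ∀ F : ℕ → Set α, (∀ n, F n ∈ M) → Antitone F →
      J (⋂ n, F n) ≤ liminf (fun n => J (F n)) atTop)
    (ν : Set α → ℝ≥0∞) (hν : ∀ F G, F ⊆ G → ν F ≤ ν G) :
    ∃ T ∈ M, (∀ F ∈ M, J T ≤ J F) ∧
      ∀ F ∈ M, (∀ G ∈ M, J F ≤ J G) → ∃ G ∈ M, F ∪ T ⊆ G ∧ ν G ≤ ν T := by
  obtain ⟨F0, hF0, hJ0⟩ := hne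
  set m := ⨅ F ∈ M, J F with hmdef
  have hmJ : ∀ F ∈ M, m ≤ J F := fun F hF => iInf₂_le F hF
  have hm : m ≠ ⊤ := ((hmJ _ hF0).trans_lt hJ0).ne
  have hex : ∀ n : ℕ, ∃ F ∈ M, J F ≤ m + (2⁻¹ : ℝ≥0∞)^n := by
    intro n
    have : m < m + (2⁻¹ : ℝ≥0∞)^n := ENNReal.lt_add_right hm (by simp)
    obtain ⟨F, h⟩ := iInf_lt_iff.1 this
    obtain ⟨hF, h⟩ := iInf_lt_iff.1 h
    exact ⟨F, hF, h.le⟩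
  choose F hF hFJ using hex
  have hun := aux_union M J m hm hmJ hU2 hI2 hsub hmono
  -- a minimizer
  have hmin : ∃ T ∈ M, J T = m := by
    let G : ℕ → Set α := fun n => ⋃ k, F (k + n)
    have hG : ∀ n, G n ∈ M := fun n => hU _ fun k => hF _
    have hGa : Antitone G := by
      refine antitone_nat_of_succ_le fun n => ?_
      refine iUnion_subset fun k => ?_
      have := subset_iUnion (fun k => F (k + n)) (k+1)
      rwa [show k + 1 + n = k + (n+1) by ring] at this
    refine ⟨⋂ n, G n, hI _ hG, le_antisymm ?_ (hmJ _ (hI _ hG))⟩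
    refine (hanti G hG hGa).trans ?_
    have h1 : ∀ n, J (G n) ≤ m + ∑' k, (2⁻¹ : ℝ≥0∞)^(k+n) :=
      fun n => hun _ (fun k => hF _) _ (fun k => hFJ (k+n))
    have h2 : Tendsto (fun n => m + ∑' k, (2⁻¹ : ℝ≥0∞)^(k+n)) atTop (nhds (m + 0)) := by
      refine Tendsto.add tendsto_const_nhds ?_
      refine ENNReal.tendsto_sum_nat_add (fun k => (2⁻¹ : ℝ≥0∞)^k) ?_
      rw [ENNReal.tsum_geometric]; simp
    rw [add_zero] at h2
    calc _ ≤ liminf (fun n => m + ∑' k, (2⁻¹ : ℝ≥0∞)^(k+n)) atTop :=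
          liminf_le_liminf (Eventually.of_forall h1)
      _ = m := h2.liminf_eq
  obtain ⟨T0, hT0, hT0m⟩ := hmin
  -- sup of ν over minimizers
  let A : Set (Set α) := {T | T ∈ M ∧ J T = m}
  obtain ⟨u, -, hu, huA⟩ := exists_seq_tendsto_sSup (S := ν '' A) ⟨_, T0, ⟨hT0, hT0m⟩, rfl⟩
    (OrderTop.bddAbove _)
  choose K hK hKu using huA
  have hT : ⋃ n, K n ∈ M := hU _ fun n => (hK n).1
  have hTm : J (⋃ n, K n) = m := by
    refine le_antisymm ?_ (hmJ _ hT)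
    have := hun K (fun n => (hK n).1) (fun _ => 0) (fun n => by simp [(hK n).2])
    simpa using this
  refine ⟨⋃ n, K n, hT, fun F hF => hTm ▸ hmJ F hF, fun F hF hFm => ?_⟩
  have hFe : J F = m := le_antisymm (hTm ▸ hFm _ hT) (hmJ _ hF)
  have hGM := hU2 _ hF _ hT
  have hGe : J (F ∪ ⋃ n, K n) = m := by
    refine le_antisymm ?_ (hmJ _ hGM)
    have h3 := hsub _ hF _ hT
    have h4 := hmJ _ (hI2 _ hF _ hT)
    rw [hFe, hTm] at h3
    exact (ENNReal.add_le_add_iff_right hm).1 ((add_le_add le_rfl h4).trans h3)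
  refine ⟨_, hGM, Subset.rfl, ?_⟩
  have h5 : ν (F ∪ ⋃ n, K n) ≤ sSup (ν '' A) := le_sSup ⟨_, ⟨hGM, hGe⟩, rfl⟩
  refine h5.trans (le_of_tendsto' hu fun n => ?_)
  rw [← hKu]
  exact hν _ _ (subset_iUnion _ _)

theorem aux_slab_meas (d : ℕ) (R : ℝ) : MeasurableSet (SlabR d R) :=
  (measurableSet_lt measurable_const measurable_snd).inter
    (measurableSet_lt measurable_snd measurable_const)

theorem aux_slab_sub (d : ℕ) (R : ℝ) :
    SlabR d R ⊆ (Set.univ : Set (Torus d)) ×ˢ Icc (-R) R :=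
  fun x hx => ⟨trivial, hx.1.le, hx.2.le⟩

theorem aux_slab_fin (d : ℕ) (R : ℝ) : volume (SlabR d R) < ⊤ :=
  (measure_mono (aux_slab_sub d R)).trans_lt (isCompact_univ.prod isCompact_Icc).measure_lt_top

theorem aux_line_null (d : ℕ) (R : ℝ) : volume {x : Cyl d | x.2 = R} = 0 := by
  have : {x : Cyl d | x.2 = R} = (Set.univ : Set (Torus d)) ×ˢ {R} := by ext; simp
  rw [this, Measure.volume_eq_prod, Measure.prod_prod]; simp

theorem aux_int (d : ℕ) (R : ℝ) (E : Set (Cyl d)) : IntegrableOn (sdist d E) (SlabR d R) := by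
  have hc : Continuous (sdist d E) :=
    (Metric.continuous_infDist_pt _).sub (Metric.continuous_infDist_pt _)
  exact (hc.continuousOn.integrableOn_compact (isCompact_univ.prod isCompact_Icc)).mono_set
    (aux_slab_sub d R)

/-- the bulk term -/
def bulk (d : ℕ) (R h : ℝ) (E F : Set (Cyl d)) : ℝ :=
  (1/h) * ∫ x in F ∩ SlabR d R, sdist d E x

def bulkC (d : ℕ) (R h : ℝ) (E : Set (Cyl d)) : ℝ :=
  |1/h| * ∫ x in SlabR d R, ‖sdist d E x‖

theorem aux_bulk_bound (d : ℕ) (R h : ℝ) (E F : Set (Cyl d)) :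
    0 ≤ bulk d R h E F + bulkC d R h E := by
  have h1 : |bulk d R h E F| ≤ bulkC d R h E := by
    unfold bulk bulkC
    rw [abs_mul]
    refine mul_le_mul_of_nonneg_left ?_ (abs_nonneg _)
    refine (norm_integral_le_integral_norm (sdist d E)).trans ?_
    exact setIntegral_mono_set (aux_int d R E).norm (Eventually.of_forall fun _ => norm_nonneg _)
      (HasSubset.Subset.eventuallyLE inter_subset_right)
  linarith [neg_abs_le (bulk d R h E F)]

theorem aux_bulk_mod (d : ℕ) (R h : ℝ) (E F G : Set (Cyl d)) (hG : MeasurableSet G) :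
    bulk d R h E (F ∪ G) + bulk d R h E (F ∩ G) = bulk d R h E F + bulk d R h E G := by
  unfold bulk
  have hi : ∀ A : Set (Cyl d), A ⊆ SlabR d R → IntegrableOn (sdist d E) A :=
    fun A hA => (aux_int d R E).mono_set hA
  have h1 := integral_inter_add_sdiff (μ := volume) (f := sdist d E) (s := F ∩ SlabR d R) hG
    (hi _ inter_subset_right)
  have h2 := integral_inter_add_sdiff (μ := volume) (f := sdist d E) (s := (F ∪ G) ∩ SlabR d R) hG
    (hi _ inter_subset_right)
  have e1 : F ∩ SlabR d R ∩ G = F ∩ G ∩ SlabR d R := by ext x; simp; tauto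
  have e2 : (F ∪ G) ∩ SlabR d R ∩ G = G ∩ SlabR d R := by ext x; simp; tauto
  have e3 : ((F ∪ G) ∩ SlabR d R) \ G = (F ∩ SlabR d R) \ G := by ext x; simp; tauto
  rw [e1] at h1
  rw [e2, e3] at h2
  rw [← mul_add, ← mul_add]
  congr 1
  linarith

/-- shifted functional -/
def Jfun (d : ℕ) (P : GenPerimeter d) (R h : ℝ) (E F : Set (Cyl d)) : ℝ≥0∞ :=
  P.P F + ENNReal.ofReal (bulk d R h E F + bulkC d R h E)

theorem aux_J_eq (d : ℕ) (P : GenPerimeter d) (R h : ℝ) (E F : Set (Cyl d)) :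
    ((Jfun d P R h E F : ℝ≥0∞) : EReal) = Ftilde d P R h E F + (bulkC d R h E : ℝ) := by
  unfold Jfun Ftilde
  rw [EReal.coe_ennreal_add, EReal.coe_ennreal_ofReal, max_eq_left (aux_bulk_bound d R h E F),
    EReal.coe_add, add_assoc]
  rfl

theorem aux_J_le (d : ℕ) (P : GenPerimeter d) (R h : ℝ) (E F G : Set (Cyl d)) :
    Jfun d P R h E F ≤ Jfun d P R h E G ↔ Ftilde d P R h E F ≤ Ftilde d P R h E G := by
  rw [← EReal.coe_ennreal_le_coe_ennreal_iff, aux_J_eq, aux_J_eq]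
  constructor
  · intro h1
    have := add_le_add_left h1 ((-(bulkC d R h E) : ℝ) : EReal)
    rw [add_assoc, add_assoc, ← EReal.coe_add] at this
    simpa using this
  · intro h1
    exact add_le_add h1 le_rfl

theorem aux_J_sub (d : ℕ) (P : GenPerimeter d) (R h : ℝ) (E F G : Set (Cyl d))
    (hG : MeasurableSet G) :
    Jfun d P R h E (F ∪ G) + Jfun d P R h E (F ∩ G) ≤ Jfun d P R h E F + Jfun d P R h E G := by
  unfold Jfun
  have h1 := P.submodular F G
  have h2 := aux_bulk_mod d R h E F G hG
  rw [add_add_add_comm, add_add_add_comm (P.P F)]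
  refine add_le_add h1 ?_
  rw [← ENNReal.ofReal_add (aux_bulk_bound ..) (aux_bulk_bound ..),
    ← ENNReal.ofReal_add (aux_bulk_bound ..) (aux_bulk_bound ..)]
  apply ENNReal.ofReal_le_ofReal
  linarith

theorem aux_J_lsc (d : ℕ) (P : GenPerimeter d) (R h : ℝ) (E : Set (Cyl d))
    (F : ℕ → Set (Cyl d)) (G : Set (Cyl d)) (hF : ∀ n, MeasurableSet (F n)) (hG : MeasurableSet G)
    (hanti : Antitone fun n => symmDiff (F n) G) (hemp : ⋂ n, symmDiff (F n) G = ∅)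
    (hb : Tendsto (fun n => bulk d R h E (F n)) atTop (nhds (bulk d R h E G))) :
    Jfun d P R h E G ≤ liminf (fun n => Jfun d P R h E (F n)) atTop := by
  have h1 : P.P G ≤ liminf (fun n => P.P (F n)) atTop := by
    apply P.lsc
    intro R' _
    have := tendsto_measure_iInter_atTop (μ := volume)
      (s := fun n => symmDiff (F n) G ∩ SlabR d R')
      (fun n => (((hF n).symmDiff hG).inter (aux_slab_meas d R')).nullMeasurableSet)
      (fun a b hab => inter_subset_inter_left _ (hanti hab))
      ⟨0, ((measure_mono inter_subset_right).trans_lt (aux_slab_fin d R')).ne⟩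
    rw [← iInter_inter, hemp, empty_inter, measure_empty] at this
    exact this
  have h2 : Tendsto (fun n => ENNReal.ofReal (bulk d R h E (F n) + bulkC d R h E)) atTop
      (nhds (ENNReal.ofReal (bulk d R h E G + bulkC d R h E))) :=
    ENNReal.tendsto_ofReal (hb.add_const _)
  unfold Jfun
  rw [← h2.liminf_eq]
  refine (add_le_add h1 le_rfl).trans ?_
  exact aux_liminf_add _ _

theorem aux_J_mono (d : ℕ) (P : GenPerimeter d) (R h : ℝ) (E : Set (Cyl d))
    (F : ℕ → Set (Cyl d)) (hF : ∀ n, MeasurableSet (F n)) (hm : Monotone F) :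
    Jfun d P R h E (⋃ n, F n) ≤ liminf (fun n => Jfun d P R h E (F n)) atTop := by
  have e : ∀ n, symmDiff (F n) (⋃ k, F k) = (⋃ k, F k) \ F n := fun n =>
    symmDiff_of_le (subset_iUnion F n)
  refine aux_J_lsc d P R h E F _ hF (MeasurableSet.iUnion hF) ?_ ?_ ?_
  · intro a b hab
    simp only [e]
    exact diff_subset_diff_right (hm hab)
  · simp only [e]
    rw [← diff_iUnion, diff_self]
  · unfold bulk
    refine Tendsto.const_mul _ ?_
    rw [iUnion_inter]
    exact tendsto_setIntegral_of_monotone (fun n => (hF n).inter (aux_slab_meas d R))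
      (fun a b hab => inter_subset_inter_left _ (hm hab))
      ((aux_int d R E).mono_set (iUnion_subset fun _ => inter_subset_right))

theorem aux_J_anti (d : ℕ) (P : GenPerimeter d) (R h : ℝ) (E : Set (Cyl d))
    (F : ℕ → Set (Cyl d)) (hF : ∀ n, MeasurableSet (F n)) (hm : Antitone F) :
    Jfun d P R h E (⋂ n, F n) ≤ liminf (fun n => Jfun d P R h E (F n)) atTop := by
  have e : ∀ n, symmDiff (F n) (⋂ k, F k) = F n \ (⋂ k, F k) := fun n =>
    symmDiff_of_ge (iInter_subset F n)
  refine aux_J_lsc d P R h E F _ hF (MeasurableSet.iInter hF) ?_ ?_ ?_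
  · intro a b hab
    simp only [e]
    exact diff_subset_diff_left (hm hab)
  · simp only [e]
    ext x
    simp only [mem_iInter, mem_diff, mem_empty_iff_false, iff_false]
    intro hx
    exact (hx 0).2 fun n => (hx n).1
  · unfold bulk
    refine Tendsto.const_mul _ ?_
    rw [iInter_inter]
    exact tendsto_setIntegral_of_antitone (fun n => (hF n).inter (aux_slab_meas d R))
      (fun a b hab => inter_subset_inter_left _ (hm hab))
      ⟨0, (aux_int d R E).mono_set inter_subset_right⟩

theorem aux_null (d : ℕ) (R : ℝ) (A B C : Set (Cyl d)) (hA : MeasurableSet A)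
    (hAC : A ⊆ C) (hBC : B ⊆ C) (hAB : B \ A ⊆ {x | -R ≤ x.2 ∧ x.2 < R})
    (hle : volume (C ∩ SlabR d R) ≤ volume (A ∩ SlabR d R)) : volume (B \ A) = 0 := by
  have h1 : volume ((C ∩ SlabR d R) \ (A ∩ SlabR d R)) = 0 := by
    have hfin : volume (A ∩ SlabR d R) ≠ ⊤ :=
      ((measure_mono inter_subset_right).trans_lt (aux_slab_fin d R)).ne
    rw [measure_diff (inter_subset_inter_left _ hAC)
      (hA.inter (aux_slab_meas d R)).nullMeasurableSet hfin]
    exact tsub_eq_zero_of_le hle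
  refine measure_mono_null (t := ((C ∩ SlabR d R) \ (A ∩ SlabR d R)) ∪ {x | x.2 = -R}) ?_
    (measure_union_null h1 (aux_line_null d (-R)))
  intro x hx
  obtain ⟨h2, h3⟩ := hAB hx
  rcases h2.eq_or_lt with h4 | h4
  · exact Or.inr h4.symm
  · exact Or.inl ⟨⟨hBC hx.1, h4, h3⟩, fun h => hx.2 h.1⟩

/-- Existence of minimal and maximal minimizers of `𝓕̃_h(E,·)` in `𝔐_R`. -/
theorem exists_minimal_and_maximal_minimizer (d : ℕ) (hd : 2 ≤ d) (P : GenPerimeter d)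
    (R h : ℝ) (hR : 0 < R) (hh : 0 < h) (E : Set (Cyl d)) (hE : E ∈ MR d R)
    (hPE : P.P E < ⊤) :
    ∃ Tm TM : Set (Cyl d), IsMinimizer d P R h E Tm ∧ IsMinimizer d P R h E TM ∧
      ∀ F : Set (Cyl d), IsMinimizer d P R h E F →
        volume (Tm \ F) = 0 ∧ volume (F \ TM) = 0 := by
  have hdiff : ∀ A ∈ MR d R, ∀ B ∈ MR d R, B \ A ⊆ {x | -R ≤ x.2 ∧ x.2 < R} := by
    intro A hA B hB x hx
    refine ⟨?_, hB.2.2 hx.1⟩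
    by_contra hlt
    exact hx.2 (hA.2.1 (not_le.1 hlt))
  have hfin : ∃ F ∈ MR d R, Jfun d P R h E F < ⊤ :=
    ⟨E, hE, ENNReal.add_lt_top.2 ⟨hPE, ENNReal.ofReal_lt_top⟩⟩
  have hU : ∀ F : ℕ → Set (Cyl d), (∀ n, F n ∈ MR d R) → ⋃ n, F n ∈ MR d R := fun F hF =>
    ⟨MeasurableSet.iUnion fun n => (hF n).1, (hF 0).2.1.trans (subset_iUnion _ _),
      iUnion_subset fun n => (hF n).2.2⟩
  have hI : ∀ F : ℕ → Set (Cyl d), (∀ n, F n ∈ MR d R) → ⋂ n, F n ∈ MR d R := fun F hF =>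
    ⟨MeasurableSet.iInter fun n => (hF n).1, subset_iInter fun n => (hF n).2.1,
      (iInter_subset _ 0).trans (hF 0).2.2⟩
  have hU2 : ∀ F ∈ MR d R, ∀ G ∈ MR d R, F ∪ G ∈ MR d R := fun F hF G hG =>
    ⟨hF.1.union hG.1, hF.2.1.trans subset_union_left, union_subset hF.2.2 hG.2.2⟩
  have hI2 : ∀ F ∈ MR d R, ∀ G ∈ MR d R, F ∩ G ∈ MR d R := fun F hF G hG =>
    ⟨hF.1.inter hG.1, subset_inter hF.2.1 hG.2.1, inter_subset_left.trans hF.2.2⟩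
  obtain ⟨TM, hTM, hTMmin, hTMmax⟩ := aux_exists (MR d R) (Jfun d P R h E) hfin hU hI hU2 hI2
    (fun F _ G hG => aux_J_sub d P R h E F G hG.1)
    (fun F hF hm => aux_J_mono d P R h E F (fun n => (hF n).1) hm)
    (fun F hF hm => aux_J_anti d P R h E F (fun n => (hF n).1) hm)
    (fun F => volume (F ∩ SlabR d R))
    (fun F G hFG => measure_mono (inter_subset_inter_left _ hFG))
  obtain ⟨T, hT, hTmin, hTmax⟩ := aux_exists {F | Fᶜ ∈ MR d R} (fun F => Jfun d P R h E Fᶜ)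
    ⟨Eᶜ, by simpa using hE, by
      have hh1 : Jfun d P R h E E < ⊤ := ENNReal.add_lt_top.2 ⟨hPE, ENNReal.ofReal_lt_top⟩
      simpa using hh1⟩
    (fun F hF => by
      simp only [mem_setOf_eq, compl_iUnion]
      exact hI _ hF)
    (fun F hF => by
      simp only [mem_setOf_eq, compl_iInter]
      exact hU _ hF)
    (fun F hF G hG => by
      simp only [mem_setOf_eq, compl_union]
      exact hI2 _ hF _ hG)
    (fun F hF G hG => by
      simp only [mem_setOf_eq, compl_inter]
      exact hU2 _ hF _ hG)
    (fun F hF G hG => by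
      simp only [compl_inter, compl_union]
      rw [add_comm]
      exact aux_J_sub d P R h E _ _ (MeasurableSet.compl_iff.1 (by simpa using hG.1.compl)))
    (fun F hF hm => by
      simp only [compl_iUnion]
      exact aux_J_anti d P R h E (fun n => (F n)ᶜ) (fun n => (hF n).1)
        (fun a b hab => compl_subset_compl.2 (hm hab)))
    (fun F hF hm => by
      simp only [compl_iInter]
      exact aux_J_mono d P R h E (fun n => (F n)ᶜ) (fun n => (hF n).1)
        (fun a b hab => compl_subset_compl.2 (hm hab)))
    (fun F => volume (F ∩ SlabR d R))
    (fun F G hFG => measure_mono (inter_subset_inter_left _ hFG))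
  refine ⟨Tᶜ, TM, ⟨hT, fun F hF => ?_⟩, ⟨hTM, fun F hF => ?_⟩, fun F hF => ⟨?_, ?_⟩⟩
  · rw [← aux_J_le]
    simpa using hTmin Fᶜ (by simpa using hF)
  · rw [← aux_J_le]
    exact hTMmin F hF
  · obtain ⟨G, hG, hsub, hle⟩ := hTmax Fᶜ (by simpa using hF.1) (fun G hG => by
      simp only [compl_compl]
      rw [aux_J_le]
      exact hF.2 _ hG)
    have e : Tᶜ \ F = Fᶜ \ T := by ext x; simp [and_comm]
    rw [e]
    refine aux_null d R T Fᶜ G (MeasurableSet.compl_iff.1 hT.1)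
      (subset_union_right.trans hsub) (subset_union_left.trans hsub) ?_ hle
    rw [← e]
    exact hdiff F hF.1 _ hT
  · obtain ⟨G, hG, hsub, hle⟩ := hTMmax F hF.1 (fun G hG => by
      rw [aux_J_le]
      exact hF.2 _ hG)
    exact aux_null d R TM F G hTM.1
      (subset_union_right.trans hsub) (subset_union_left.trans hsub) (hdiff TM hTM F hF.1) hle
end
end

section
/- Let 𝒫 be a generalized perimeter, R > 0, h > 0, E ∈ 𝔐_R with 𝒫(E) < +∞, and let F be any minimizer of 𝓕̃_h(E,·) in 𝔐_R. Then for every λ ∈ (−R,R): if H_λ ⊆ E then |H_λ \ F| = 0, and if E ⊆ H_λ then |F \ H_λ| = 0. In particular, if E ∈ 𝔐_r for some 0 < r ≤ R, then F coincides up to a null set with a set in 𝔐_r. -/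
open MeasureTheory Filter Set
open scoped ENNReal

noncomputable section

lemma aux_levels (d : ℕ) (P : GenPerimeter d) (S : ℕ → Set (Cyl d)) (c : ℕ → Cyl d → ℕ)
    (hc0 : ∀ x, c 0 x = 0) (hcin : ∀ n x, x ∈ S n → c (n+1) x = c n x + 1)
    (hcout : ∀ n x, x ∉ S n → c (n+1) x = c n x) (n : ℕ) :
    ∑ k ∈ Finset.range n, P.P {x | k + 1 ≤ c n x} ≤ ∑ i ∈ Finset.range n, P.P (S i) := by
  have hle : ∀ n x, c n x ≤ n := by
    intro n x
    induction n with
    | zero => simp [hc0]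
    | succ n ih =>
      by_cases hx : x ∈ S n
      · rw [hcin n x hx]; omega
      · rw [hcout n x hx]; omega
  induction n with
  | zero => simp
  | succ n ih =>
    have key : ∀ m, ∑ k ∈ Finset.range m, P.P {x | k + 1 ≤ c (n+1) x}
        + P.P ({x | m ≤ c n x} ∩ S n)
        ≤ ∑ k ∈ Finset.range m, P.P {x | k + 1 ≤ c n x} + P.P (S n) := by
      intro m
      induction m with
      | zero => simp
      | succ m ihm =>
        rw [Finset.sum_range_succ, Finset.sum_range_succ]
        have h1 := P.submodular {x | m + 1 ≤ c n x} ({x | m ≤ c n x} ∩ S n)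
        have e1 : {x | m + 1 ≤ c n x} ∪ ({x | m ≤ c n x} ∩ S n) = {x | m + 1 ≤ c (n+1) x} := by
          ext x
          by_cases hx : x ∈ S n
          · simp [hcin n x hx, hx]; omega
          · simp [hcout n x hx, hx]
        have e2 : {x | m + 1 ≤ c n x} ∩ ({x | m ≤ c n x} ∩ S n) = {x | m + 1 ≤ c n x} ∩ S n := by
          ext x
          simp only [mem_inter_iff, mem_ofPred_eq]
          constructor
          · rintro ⟨a, b, e⟩; exact ⟨a, e⟩
          · rintro ⟨a, e⟩; exact ⟨a, by omega, e⟩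
        rw [e1, e2] at h1
        calc _ = ∑ k ∈ Finset.range m, P.P {x | k + 1 ≤ c (n+1) x}
            + (P.P {x | m + 1 ≤ c (n+1) x} + P.P ({x | m + 1 ≤ c n x} ∩ S n)) := by ring
          _ ≤ ∑ k ∈ Finset.range m, P.P {x | k + 1 ≤ c (n+1) x}
            + (P.P {x | m + 1 ≤ c n x} + P.P ({x | m ≤ c n x} ∩ S n)) := by gcongr
          _ = (∑ k ∈ Finset.range m, P.P {x | k + 1 ≤ c (n+1) x}
            + P.P ({x | m ≤ c n x} ∩ S n)) + P.P {x | m + 1 ≤ c n x} := by ring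
          _ ≤ (∑ k ∈ Finset.range m, P.P {x | k + 1 ≤ c n x} + P.P (S n))
            + P.P {x | m + 1 ≤ c n x} := by gcongr
          _ = _ := by ring
    have e3 : {x | n ≤ c n x} ∩ S n = {x | n + 1 ≤ c (n+1) x} := by
      ext x
      by_cases hx : x ∈ S n
      · simp [hcin n x hx, hx]
      · have := hle n x
        simp [hcout n x hx, hx]; omega
    have := key n
    rw [e3] at this
    rw [Finset.sum_range_succ, Finset.sum_range_succ]
    exact this.trans (by gcongr)

lemma aux_step (f : ℕ → ℝ≥0∞) (n : ℕ) (hn : 0 < n) :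
    ∫⁻ s in Ico (0:ℝ) 1, f ⌊(n:ℝ) * s⌋₊ ≤ (n:ℝ≥0∞)⁻¹ * ∑ k ∈ Finset.range n, f k := by
  have hn' : (0:ℝ) < n := by exact_mod_cast hn
  have hsub : Ico (0:ℝ) 1 ⊆ ⋃ k : Fin n, Ico ((k:ℝ)/n) (((k:ℕ)+1:ℝ)/n) := by
    intro s hs
    have h0 : 0 ≤ (n:ℝ) * s := mul_nonneg hn'.le hs.1
    have hlt : ⌊(n:ℝ) * s⌋₊ < n := by
      rw [Nat.floor_lt h0]; nlinarith [hs.2]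
    rw [mem_iUnion]
    refine ⟨⟨_, hlt⟩, ?_, ?_⟩
    · rw [div_le_iff₀ hn']; have := Nat.floor_le h0; simp only; linarith
    · rw [lt_div_iff₀ hn']; have := Nat.lt_floor_add_one ((n:ℝ) * s); simp only; linarith
  calc _ ≤ ∫⁻ s in ⋃ k : Fin n, Ico ((k:ℝ)/n) (((k:ℕ)+1:ℝ)/n), f ⌊(n:ℝ) * s⌋₊ :=
        lintegral_mono_set hsub
    _ ≤ ∑' k : Fin n, ∫⁻ s in Ico ((k:ℝ)/n) (((k:ℕ)+1:ℝ)/n), f ⌊(n:ℝ) * s⌋₊ :=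
        lintegral_iUnion_le _ _
    _ = ∑ k : Fin n, ∫⁻ s in Ico ((k:ℝ)/n) (((k:ℕ)+1:ℝ)/n), f ⌊(n:ℝ) * s⌋₊ := tsum_fintype _
    _ = ∑ k : Fin n, (n:ℝ≥0∞)⁻¹ * f k := by
        refine Finset.sum_congr rfl fun k _ => ?_
        have : ∫⁻ s in Ico ((k:ℝ)/n) (((k:ℕ)+1:ℝ)/n), f ⌊(n:ℝ) * s⌋₊
            = ∫⁻ s in Ico ((k:ℝ)/n) (((k:ℕ)+1:ℝ)/n), f k := by
          refine setLIntegral_congr_fun measurableSet_Ico fun s hs => ?_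
          have h1 := hs.1
          have h2 := hs.2
          rw [div_le_iff₀ hn'] at h1
          rw [lt_div_iff₀ hn'] at h2
          have : ⌊(n:ℝ) * s⌋₊ = (k:ℕ) := by
            rw [Nat.floor_eq_iff (by rw [mul_comm]; exact le_trans (Nat.cast_nonneg _) h1)]
            constructor <;> linarith
          simp only [this]
        rw [this, setLIntegral_const, Real.volume_Ico, mul_comm]
        congr 1
        rw [← sub_div, add_sub_cancel_left, one_div, ENNReal.ofReal_inv_of_pos hn',
          ENNReal.ofReal_natCast]
    _ = _ := by
        rw [← Finset.mul_sum, Finset.sum_range]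

lemma vol_eq (d : ℕ) : (volume : Measure (Cyl d)) = (volume : Measure (Torus d)).prod volume := rfl

instance inst_inv (d : ℕ) : (volume : Measure (Cyl d)).IsAddLeftInvariant := by
  haveI : (volume : Measure (Torus d)).IsAddLeftInvariant :=
    Measure.pi.isAddLeftInvariant (fun _ => volume)
  rw [vol_eq]
  exact Measure.prod.instIsAddLeftInvariant

lemma vol_strip (d : ℕ) (a b : ℝ) : volume {w : Cyl d | a ≤ w.2 ∧ w.2 < b} =
    volume (univ : Set (Torus d)) * ENNReal.ofReal (b - a) := by
  have : {w : Cyl d | a ≤ w.2 ∧ w.2 < b} = univ ×ˢ Ico a b := by ext; simp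
  rw [this, vol_eq, Measure.prod_prod, Real.volume_Ico]

lemma vol_strip_top (d : ℕ) (a b : ℝ) : volume {w : Cyl d | a ≤ w.2 ∧ w.2 < b} ≠ ⊤ := by
  rw [vol_strip]; exact ENNReal.mul_ne_top (measure_ne_top _ _) ENNReal.ofReal_ne_top

lemma vol_torus_ne (d : ℕ) : volume (univ : Set (Torus d)) ≠ 0 := by
  rw [volume_pi, Measure.pi_univ]; simp

lemma vol_hyper (d : ℕ) (a : ℝ) : volume {w : Cyl d | w.2 = a} = 0 := by
  have : {w : Cyl d | w.2 = a} = univ ×ˢ {a} := by ext; simp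
  rw [this, vol_eq, Measure.prod_prod]; simp

lemma meas_strip (d : ℕ) (a b : ℝ) : MeasurableSet {w : Cyl d | a ≤ w.2 ∧ w.2 < b} :=
  (measurableSet_le measurable_const measurable_snd).inter
    (measurableSet_lt measurable_snd measurable_const)

lemma strip_antitone (d : ℕ) (R : ℝ) (G : Set (Cyl d)) (hG : G ∈ MR d R) :
    Antitone fun t : ℝ => volume (G ∩ {w : Cyl d | t ≤ w.2 ∧ w.2 < t + 2 * R}) := by
  intro x y hxy
  by_cases hR : R ≤ 0
  · have : {w : Cyl d | y ≤ w.2 ∧ w.2 < y + 2 * R} = ∅ := by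
      ext w; simp; intro; linarith
    simp [this]
  push Not at hR
  simp only
  have hadd : ∀ a b c : ℝ, a ≤ b → b ≤ c → volume (G ∩ {w : Cyl d | a ≤ w.2 ∧ w.2 < c}) =
      volume (G ∩ {w : Cyl d | a ≤ w.2 ∧ w.2 < b}) +
      volume (G ∩ {w : Cyl d | b ≤ w.2 ∧ w.2 < c}) := by
    intro a b c hab hbc
    rw [← measure_union _ (hG.1.inter (meas_strip d b c)), ← inter_union_distrib_left]
    · congr 2
      ext w
      simp only [mem_ofPred_eq, mem_union]
      constructor
      · rintro ⟨h1, h2⟩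
        by_cases h : w.2 < b
        · exact Or.inl ⟨h1, h⟩
        · exact Or.inr ⟨not_lt.1 h, h2⟩
      · rintro (h | h) <;> constructor <;> linarith [h.1, h.2]
    · rw [Set.disjoint_left]
      rintro w ⟨_, h1⟩ ⟨_, h2⟩
      exact absurd h1.2 (not_lt.2 h2.1)
  have htr : volume (G ∩ {w : Cyl d | x + 2 * R ≤ w.2 ∧ w.2 < y + 2 * R}) ≤
      volume (G ∩ {w : Cyl d | x ≤ w.2 ∧ w.2 < y}) := by
    rw [← measure_preimage_add volume ((0, 2 * R) : Cyl d)]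
    refine measure_mono ?_
    rintro w ⟨hw1, hw2⟩
    have h3 := hG.2.2 hw1
    simp only [mem_ofPred_eq, Prod.snd_add] at h3 hw2
    refine ⟨hG.2.1 ?_, ?_, ?_⟩
    · simp only [mem_ofPred_eq]; linarith
    · linarith [hw2.1]
    · linarith [hw2.2]
  have h1 := hadd x (x + 2 * R) (y + 2 * R) (by linarith) (by linarith)
  have h2 := hadd x y (y + 2 * R) (by linarith) (by linarith)
  have hfin : volume (G ∩ {w : Cyl d | x ≤ w.2 ∧ w.2 < y}) ≠ ⊤ :=
    measure_ne_top_of_subset inter_subset_right (vol_strip_top d x y)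
  rw [← ENNReal.add_le_add_iff_left hfin, ← h2, h1, add_comm]
  gcongr

lemma P_translate (d : ℕ) (P : GenPerimeter d) (G : Set (Cyl d)) (z : Cyl d) :
    P.P {x | x + z ∈ G} = P.P G := by
  have : ∀ i, ∃ r : ℝ, (r : AddCircle (1:ℝ)) = - z.1 i := fun i =>
    QuotientAddGroup.mk_surjective _
  choose r hr using this
  rw [← P.transl_inv G (r, - z.2)]
  congr 1
  ext x
  simp only [mem_ofPred_eq, mem_image]
  constructor
  · intro hx
    refine ⟨x + z, hx, ?_⟩
    ext i <;> simp [translCyl, hr]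
  · rintro ⟨y, hy, rfl⟩
    convert hy using 1
    ext i <;> simp [translCyl, hr]

lemma P_half (d : ℕ) (P : GenPerimeter d) (a b : ℝ) :
    P.P (halfspace d a) = P.P (halfspace d b) := by
  rw [← P_translate d P (halfspace d b) (0, b - a)]
  congr 1
  ext x
  simp only [halfspace, mem_ofPred_eq, Prod.snd_add]
  constructor <;> intro <;> linarith

lemma P_half_lt (d : ℕ) (P : GenPerimeter d) (a : ℝ) : P.P (halfspace d a) < ⊤ := by
  have : P.P (halfspace d a) = P.P (subgraph d fun _ => a) := by
    apply P.congr_ae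
    refine measure_mono_null ?_ (vol_hyper d a)
    intro x hx
    simp only [mem_symmDiff, halfspace, subgraph, mem_ofPred_eq] at hx ⊢
    rcases hx with ⟨h1, h2⟩ | ⟨h1, h2⟩ <;> linarith
  rw [this]
  exact P.lip_finite 1 one_pos _ ⟨_, LipschitzWith.const' a, rfl⟩

lemma MR_half_meas (d : ℕ) (a : ℝ) : MeasurableSet (halfspace d a) :=
  measurableSet_lt measurable_snd measurable_const

open ProbabilityTheory in
lemma exists_samples (d : ℕ) (ν : Measure (Cyl d)) [IsProbabilityMeasure ν] (G : Set (Cyl d))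
    (hG : MeasurableSet G) (u : Cyl d → ℝ) (hu : Measurable u)
    (huν : ∀ x, u x = ν.real {z | x + z ∈ G}) :
    ∃ z : ℕ → Cyl d, ∀ᵐ x : Cyl d, Tendsto
      (fun n : ℕ => (∑ i ∈ Finset.range n, G.indicator (1 : Cyl d → ℝ) (x + z i)) / n)
      atTop (nhds (u x)) := by
  let μ : Measure (ℕ → Cyl d) := Measure.infinitePi fun _ => ν
  have hind : Measurable (G.indicator (1 : Cyl d → ℝ)) := measurable_one.indicator hG
  have h1 : ∀ x : Cyl d, ∀ᵐ z ∂μ, Tendsto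
      (fun n : ℕ => (∑ i ∈ Finset.range n, G.indicator (1 : Cyl d → ℝ) (x + z i)) / n)
      atTop (nhds (u x)) := by
    intro x
    have hX : Measurable fun z : Cyl d => G.indicator (1 : Cyl d → ℝ) (x + z) :=
      hind.comp (measurable_const_add x)
    have hXi : ∀ i : ℕ, Measurable fun z : ℕ → Cyl d => G.indicator (1 : Cyl d → ℝ) (x + z i) :=
      fun i => hX.comp (measurable_pi_apply i)
    have hind2 : iIndepFun (fun (i : ℕ) (z : ℕ → Cyl d) =>
        G.indicator (1 : Cyl d → ℝ) (x + z i)) μ :=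
      iIndepFun_infinitePi (P := fun _ : ℕ => ν)
        (X := fun _ z => G.indicator (1 : Cyl d → ℝ) (x + z)) (fun _ => hX)
    have hmp : ∀ i, MeasurePreserving (Function.eval i) μ ν := fun i =>
      measurePreserving_eval_infinitePi (fun _ => ν) i
    have hmap : ∀ i, μ.map (fun z => G.indicator (1 : Cyl d → ℝ) (x + z i)) =
        ν.map fun z : Cyl d => G.indicator (1 : Cyl d → ℝ) (x + z) := by
      intro i
      rw [← (hmp i).map_eq, Measure.map_map hX (measurable_pi_apply i)]
      rfl
    have hsl := strong_law_ae_real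
      (fun (i : ℕ) (z : ℕ → Cyl d) => G.indicator (1 : Cyl d → ℝ) (x + z i)) (μ := μ) ?_
      (fun i j hij => hind2.indepFun hij)
      (fun i => ⟨(hXi i).aemeasurable, (hXi 0).aemeasurable, by rw [hmap, hmap]⟩)
    · have hint : ∫ z, G.indicator (1 : Cyl d → ℝ) (x + z 0) ∂μ = u x := by
        have : ∫ z, G.indicator (1 : Cyl d → ℝ) (x + z 0) ∂μ =
            ∫ z, G.indicator (1 : Cyl d → ℝ) (x + z) ∂ν := by
          rw [← (hmp 0).map_eq, integral_map (measurable_pi_apply 0).aemeasurable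
            hX.aestronglyMeasurable]
        rw [this, huν]
        have e : (fun z => G.indicator (1 : Cyl d → ℝ) (x + z)) =
          {z | x + z ∈ G}.indicator 1 := by
          ext z; simp [indicator]
        rw [e, integral_indicator_one]
        exact measurable_const_add x hG
      rw [hint] at hsl
      exact hsl
    · refine Integrable.of_bound (hXi 0).aestronglyMeasurable 1 (ae_of_all _ fun z => ?_)
      simp only [indicator]
      split_ifs <;> simp
  have hm : MeasurableSet {p : Cyl d × (ℕ → Cyl d) | Tendsto
      (fun n : ℕ => (∑ i ∈ Finset.range n, G.indicator (1 : Cyl d → ℝ) (p.1 + p.2 i)) / n)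
      atTop (nhds (u p.1))} := by
    refine measurableSet_tendsto_fun (fun n => ?_) (hu.comp measurable_fst)
    refine Measurable.div_const (Finset.measurable_fun_sum _ fun i _ => ?_) _
    exact hind.comp (measurable_fst.add ((measurable_pi_apply i).comp measurable_snd))
  have h2 := (Measure.ae_ae_comm (μ := (volume : Measure (Cyl d))) (ν := μ) hm).1 (ae_of_all _ h1)
  exact h2.exists

lemma P_half_le (d : ℕ) (P : GenPerimeter d) (R : ℝ) (hR : 0 < R) (G : Set (Cyl d))
    (hG : G ∈ MR d R) (lam : ℝ) : P.P (halfspace d lam) ≤ P.P G := by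
  set B : Set (Cyl d) := {w | 0 ≤ w.2 ∧ w.2 < 2 * R} with hB
  have hBm : MeasurableSet B := meas_strip d 0 (2 * R)
  have hB0 : volume B ≠ 0 := by
    rw [hB, vol_strip]
    refine mul_ne_zero (vol_torus_ne d) ?_
    simp [hR]
  have hBt : volume B ≠ ⊤ := vol_strip_top d 0 (2 * R)
  let ν : Measure (Cyl d) := ProbabilityTheory.cond volume B
  haveI : IsProbabilityMeasure ν := ProbabilityTheory.cond_isProbabilityMeasure_of_finite hB0 hBt
  let A : ℝ → ℝ≥0∞ := fun t => volume (G ∩ {w : Cyl d | t ≤ w.2 ∧ w.2 < t + 2 * R})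
  have hA : Antitone A := strip_antitone d R G hG
  let U : ℝ → ℝ := fun t => ((volume B)⁻¹ * A t).toReal
  have hAt : ∀ t, A t ≠ ⊤ := fun t =>
    measure_ne_top_of_subset inter_subset_right (vol_strip_top d _ _)
  have hU : Antitone U := by
    intro s t hst
    refine ENNReal.toReal_mono (ENNReal.mul_ne_top (ENNReal.inv_ne_top.2 hB0) (hAt s)) ?_
    gcongr
    exact hA hst
  have hU1 : ∀ t, t < - (3 * R) → U t = 1 := by
    intro t ht
    have : G ∩ {w : Cyl d | t ≤ w.2 ∧ w.2 < t + 2 * R} = {w : Cyl d | t ≤ w.2 ∧ w.2 < t + 2 * R} :=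
      inter_eq_right.2 fun w hw => hG.2.1 (by
        have := hw.2
        simp only [mem_ofPred_eq]; linarith)
    have h2 : A t = volume B := by
      simp only [A]
      rw [this, hB, vol_strip, vol_strip]
      congr 2; ring
    simp only [U]
    rw [h2, ENNReal.inv_mul_cancel hB0 hBt]; simp
  have hU0 : ∀ t, R ≤ t → U t = 0 := by
    intro t ht
    have : G ∩ {w : Cyl d | t ≤ w.2 ∧ w.2 < t + 2 * R} = ∅ := by
      ext w
      simp only [mem_inter_iff, mem_ofPred_eq, mem_empty_iff_false, iff_false]
      rintro ⟨h1, h2, h3⟩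
      have := hG.2.2 h1
      simp only [mem_ofPred_eq] at this
      linarith
    simp [U, A, this]
  let u : Cyl d → ℝ := fun x => U x.2
  have hu : Measurable u := hU.measurable.comp measurable_snd
  have huν : ∀ x, u x = ν.real {z | x + z ∈ G} := by
    intro x
    simp only [Measure.real, ν, u, U, A]
    rw [ProbabilityTheory.cond_apply hBm, ← measure_preimage_add volume x
      (G ∩ {w : Cyl d | x.2 ≤ w.2 ∧ w.2 < x.2 + 2 * R})]
    congr 3
    ext z
    simp only [mem_preimage, mem_inter_iff, mem_ofPred_eq, hB, Prod.snd_add]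
    constructor
    · rintro ⟨h1, h2, h3⟩
      exact ⟨⟨by linarith, by linarith⟩, h1⟩
    · rintro ⟨⟨h1, h2⟩, h3⟩
      exact ⟨h3, by linarith, by linarith⟩
  obtain ⟨z, hz⟩ := exists_samples d ν G hG.1 u hu huν
  let S : ℕ → Set (Cyl d) := fun i => {x | x + z i ∈ G}
  let c : ℕ → Cyl d → ℕ := fun n x => ∑ i ∈ Finset.range n, (S i).indicator 1 x
  have hSm : ∀ i, MeasurableSet (S i) := fun i => measurable_add_const (z i) hG.1
  have hcm : ∀ n, Measurable (c n) := fun n =>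
    Finset.measurable_fun_sum _ fun i _ => measurable_one.indicator (hSm i)
  have hcc : ∀ n x, (c n x : ℝ) = ∑ i ∈ Finset.range n, G.indicator (1 : Cyl d → ℝ) (x + z i) := by
    intro n x
    simp only [c, Nat.cast_sum]
    refine Finset.sum_congr rfl fun i _ => ?_
    simp [S, indicator]
  have hlev := aux_levels d P S c (fun x => by simp [c])
    (fun n x hx => by simp [c, Finset.sum_range_succ, hx])
    (fun n x hx => by simp [c, Finset.sum_range_succ, hx])
  have hPS : ∀ i, P.P (S i) = P.P G := fun i => P_translate d P G (z i)
  simp only [hPS, Finset.sum_const, Finset.card_range, nsmul_eq_mul] at hlev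
  let f : ℕ → ℝ → ℝ≥0∞ := fun n s => P.P {x | ⌊(n:ℝ) * s⌋₊ + 1 ≤ c n x}
  have hfm : ∀ n, Measurable (f n) := fun n =>
    (measurable_of_countable (fun k : ℕ => P.P {x | k + 1 ≤ c n x})).comp
      (Nat.measurable_floor.comp (measurable_const_mul _))
  have hfint : ∀ n, 0 < n → ∫⁻ s in Ico (0:ℝ) 1, f n s ≤ P.P G := by
    intro n hn
    refine (aux_step (fun k => P.P {x | k + 1 ≤ c n x}) n hn).trans ?_
    calc _ ≤ (n:ℝ≥0∞)⁻¹ * (n * P.P G) := by gcongr; exact hlev n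
      _ = P.P G := by
        rw [← mul_assoc, ENNReal.inv_mul_cancel (by exact_mod_cast hn.ne') (by simp), one_mul]
  have hgood : ∀ s ∈ Ioo (0:ℝ) 1, volume {x | u x = s} = 0 →
      P.P (halfspace d lam) ≤ liminf (fun n => f n s) atTop := by
    intro s hs hs0
    let T : Set ℝ := {t | s < U t}
    have hTb : BddAbove T := ⟨R, fun t ht => by
      by_contra h
      push Not at h
      have h1 := hU0 t h.le
      have h2 : s < U t := ht
      rw [h1] at h2
      linarith [hs.1]⟩
    have hTn : T.Nonempty := ⟨-(3*R) - 1, by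
      change s < U _
      rw [hU1 _ (by linarith)]; exact hs.2⟩
    rw [P_half d P lam (sSup T)]
    refine P.lsc _ _ fun r hr => ?_
    have := tendsto_measure_of_ae_tendsto_indicator (μ := (volume : Measure (Cyl d))) atTop
      (A := ∅) (As := fun n : ℕ => symmDiff {x | ⌊(n:ℝ) * s⌋₊ + 1 ≤ c n x}
        (halfspace d (sSup T)) ∩ SlabR d r) MeasurableSet.empty ?_
      (B := {w | -r ≤ w.2 ∧ w.2 < r}) (meas_strip d _ _) (vol_strip_top d _ _)
      (Eventually.of_forall fun n w hw => ⟨hw.2.1.le, hw.2.2⟩) ?_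
    · simpa using this
    · intro n
      refine MeasurableSet.inter (MeasurableSet.symmDiff ?_ (MR_half_meas d _)) ?_
      · exact measurableSet_le measurable_const (hcm n)
      · exact (measurableSet_lt measurable_const measurable_snd).inter
          (measurableSet_lt measurable_snd measurable_const)
    · have e1 : ∀ᵐ x : Cyl d, u x ≠ s := by
        rw [ae_iff]; simpa using hs0
      have e2 : ∀ᵐ x : Cyl d, x.2 ≠ sSup T := by
        rw [ae_iff]; simpa using vol_hyper d (sSup T)
      filter_upwards [hz, e1, e2] with x hx hxs hxT
      rcases lt_or_gt_of_ne hxs with h | h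
      · have hge : ¬ x.2 < sSup T := by
          intro hlt
          obtain ⟨t, ht, hlt2⟩ := exists_lt_of_lt_csSup hTn hlt
          have h3 : s < U t := ht
          have h4 : U t ≤ u x := hU hlt2.le
          linarith
        filter_upwards [hx.eventually_lt_const h, eventually_gt_atTop 0] with n hn hn0
        have hn' : (0:ℝ) < n := by exact_mod_cast hn0
        rw [div_lt_iff₀ hn', ← hcc] at hn
        have : ¬ (⌊(n:ℝ) * s⌋₊ + 1 ≤ c n x) := by
          intro h5
          have h6 := (Nat.floor_lt (mul_nonneg hn'.le hs.1.le)).1 (Nat.lt_of_succ_le h5)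
          linarith
        simp only [mem_inter_iff, mem_symmDiff, halfspace, mem_ofPred_eq, mem_empty_iff_false,
          iff_false]
        tauto
      · have hlt : x.2 < sSup T := lt_of_le_of_ne (le_csSup hTb h) hxT
        filter_upwards [hx.eventually_const_lt h, eventually_gt_atTop 0] with n hn hn0
        have hn' : (0:ℝ) < n := by exact_mod_cast hn0
        rw [lt_div_iff₀ hn', ← hcc] at hn
        have : (⌊(n:ℝ) * s⌋₊ + 1 ≤ c n x) := by
          refine Nat.succ_le_of_lt ((Nat.floor_lt (mul_nonneg hn'.le hs.1.le)).2 ?_)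
          linarith
        simp only [mem_inter_iff, mem_symmDiff, halfspace, mem_ofPred_eq, mem_empty_iff_false,
          iff_false]
        tauto
  have hcount : {t : ℝ | 0 < volume {x | u x = t}}.Countable :=
    Measure.countable_meas_level_set_pos hu
  have hae : ∀ᵐ s ∂(volume.restrict (Ico (0:ℝ) 1)),
      P.P (halfspace d lam) ≤ liminf (fun n => f n s) atTop := by
    rw [ae_restrict_iff' measurableSet_Ico]
    have n1 : ∀ᵐ s : ℝ, s ∉ {t : ℝ | 0 < volume {x | u x = t}} := hcount.ae_notMem volume
    have n2 : ∀ᵐ s : ℝ, s ∉ ({0} : Set ℝ) := (countable_singleton 0).ae_notMem volume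
    filter_upwards [n1, n2] with s h1 h2 h3
    refine hgood s ⟨lt_of_le_of_ne h3.1 (fun h => h2 h.symm), h3.2⟩ ?_
    simpa using h1
  calc P.P (halfspace d lam) = ∫⁻ s in Ico (0:ℝ) 1, P.P (halfspace d lam) := by simp
    _ ≤ ∫⁻ s in Ico (0:ℝ) 1, liminf (fun n => f n s) atTop := lintegral_mono_ae hae
    _ ≤ liminf (fun n => ∫⁻ s in Ico (0:ℝ) 1, f n s) atTop := lintegral_liminf_le hfm
    _ ≤ liminf (fun _ : ℕ => P.P G) atTop := by
        refine liminf_le_liminf ?_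
        filter_upwards [eventually_gt_atTop 0] with n hn using hfint n hn
    _ = P.P G := by simp

/-- Minimizers of the incremental problem are squeezed between the halfspaces that
squeeze the datum `E`; in particular they stay in `𝔐_r` (up to null sets) if `E ∈ 𝔐_r`. -/
theorem minimizer_squeezed_by_halfspaces (d : ℕ) (hd : 2 ≤ d) (P : GenPerimeter d)
    (R h : ℝ) (hR : 0 < R) (hh : 0 < h) (E : Set (Cyl d)) (hE : E ∈ MR d R)
    (hPE : P.P E < ⊤) (F : Set (Cyl d)) (hF : IsMinimizer d P R h E F) :
    (∀ lam ∈ Set.Ioo (-R) R,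
      (halfspace d lam ⊆ E → volume (halfspace d lam \ F) = 0) ∧
      (E ⊆ halfspace d lam → volume (F \ halfspace d lam) = 0)) ∧
    (∀ r : ℝ, 0 < r → r ≤ R → E ∈ MR d r →
      ∃ F' ∈ MR d r, volume (symmDiff F F') = 0) := by
  have hFP : P.P F ≠ ⊤ := by
    intro htop
    have h1 := hF.2 E hE
    simp only [Ftilde, htop, EReal.coe_ennreal_top, EReal.top_add_coe, top_le_iff] at h1
    rw [← EReal.coe_ennreal_toReal hPE.ne, ← EReal.coe_add] at h1
    exact EReal.coe_ne_top _ h1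
  have hmin : ∀ F' ∈ MR d R, P.P F' ≤ P.P F →
      ∫ x in F ∩ SlabR d R, sdist d E x ≤ ∫ x in F' ∩ SlabR d R, sdist d E x := by
    intro F' hF' hP
    have h1 := hF.2 F' hF'
    have hP2 : P.P F' ≠ ⊤ := ne_top_of_le_ne_top hFP hP
    have h3 := ENNReal.toReal_mono hFP hP
    simp only [Ftilde] at h1
    rw [← EReal.coe_ennreal_toReal hFP, ← EReal.coe_ennreal_toReal hP2,
      ← EReal.coe_add, ← EReal.coe_add, EReal.coe_le_coe_iff] at h1
    have h4 : (1/h) * ∫ x in F ∩ SlabR d R, sdist d E x ≤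
      (1/h) * ∫ x in F' ∩ SlabR d R, sdist d E x := by linarith
    exact le_of_mul_le_mul_left h4 (by positivity)
  have hsc : Continuous (sdist d E) :=
    (Metric.continuous_infDist_pt _).sub (Metric.continuous_infDist_pt _)
  have hSm : MeasurableSet (SlabR d R) :=
    (measurableSet_lt measurable_const measurable_snd).inter
          (measurableSet_lt measurable_snd measurable_const)
  have hint : IntegrableOn (sdist d E) (SlabR d R) := by
    have hK : IsCompact ((univ : Set (Torus d)) ×ˢ Icc (-R) R) := isCompact_univ.prod isCompact_Icc
    haveI : IsFiniteMeasureOnCompacts (volume : Measure (Cyl d)) := by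
      refine ⟨fun K hK => ?_⟩
      obtain ⟨a, ha⟩ := (hK.image continuous_snd).bddBelow
      obtain ⟨b, hb⟩ := (hK.image continuous_snd).bddAbove
      refine lt_of_le_of_lt (measure_mono ?_) (vol_strip_top d a (b + 1)).lt_top
      intro x hx
      exact ⟨ha ⟨x, hx, rfl⟩, lt_of_le_of_lt (hb ⟨x, hx, rfl⟩) (lt_add_one b)⟩
    refine (hsc.continuousOn.integrableOn_compact hK).mono_set ?_
    intro x hx
    exact ⟨mem_univ _, hx.1.le, hx.2.le⟩
  have hEne : E.Nonempty := ⟨(0, -R - 1), hE.2.1 (by simp only [mem_ofPred_eq]; linarith)⟩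
  have hEcne : Eᶜ.Nonempty := ⟨(0, R), fun hx => by
    have := hE.2.2 hx
    simp only [mem_ofPred_eq] at this; linarith⟩
  have hFm := hF.1.1
  have part1 : ∀ lam ∈ Set.Ioo (-R) R,
      (halfspace d lam ⊆ E → volume (halfspace d lam \ F) = 0) ∧
      (E ⊆ halfspace d lam → volume (F \ halfspace d lam) = 0) := by
    intro lam hlam
    have hHm := MR_half_meas d lam
    have hHMR : halfspace d lam ∈ MR d R := ⟨hHm, fun x hx => by
        simp only [halfspace, mem_ofPred_eq] at hx ⊢; linarith [hlam.1], fun x hx => by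
        simp only [halfspace, mem_ofPred_eq] at hx ⊢; linarith [hlam.2]⟩
    have hUn : F ∪ halfspace d lam ∈ MR d R := ⟨hFm.union hHm,
      hF.1.2.1.trans subset_union_left, union_subset hF.1.2.2 hHMR.2.2⟩
    have hIn : F ∩ halfspace d lam ∈ MR d R := ⟨hFm.inter hHm,
      subset_inter hF.1.2.1 hHMR.2.1, inter_subset_left.trans hF.1.2.2⟩
    have hsub := P.submodular F (halfspace d lam)
    have hHt := (P_half_lt d P lam).ne
    constructor
    · intro hHE
      have hP : P.P (F ∪ halfspace d lam) ≤ P.P F := by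
        have h1 := P_half_le d P R hR _ hIn lam
        rw [← ENNReal.add_le_add_iff_right hHt]
        exact le_trans (by gcongr) hsub
      have h2 := hmin _ hUn hP
      set D := (halfspace d lam \ F) ∩ SlabR d R with hD
      have hDm : MeasurableSet D := (hHm.diff hFm).inter hSm
      have hsplit : (F ∪ halfspace d lam) ∩ SlabR d R = (F ∩ SlabR d R) ∪ D := by
        ext x; simp only [hD, mem_inter_iff, mem_union, Set.mem_sdiff]; tauto
      have hdisj : Disjoint (F ∩ SlabR d R) D := by
        rw [Set.disjoint_left]; rintro x ⟨h1, _⟩ ⟨⟨_, h2⟩, _⟩; exact h2 h1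
      have hDint : IntegrableOn (sdist d E) D := hint.mono_set inter_subset_right
      rw [hsplit, setIntegral_union hdisj hDm (hint.mono_set inter_subset_right) hDint] at h2
      have hneg : ∀ x ∈ halfspace d lam, sdist d E x < 0 := by
        intro x hx
        have hx1 : Metric.infDist x E = 0 := Metric.infDist_zero_of_mem (hHE hx)
        have hx2 : 0 < Metric.infDist x Eᶜ := by
          rw [← Metric.infDist_closure]
          refine (isClosed_closure.notMem_iff_infDist_pos hEcne.closure).1 ?_
          intro hcl
          have ho : IsOpen (halfspace d lam) := isOpen_lt continuous_snd continuous_const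
          obtain ⟨y, hy1, hy2⟩ := mem_closure_iff.1 hcl _ ho hx
          exact hy2 (hHE hy1)
        simp only [sdist]; linarith
      have hD0 : volume D = 0 := by
        by_contra hne
        have := (setIntegral_pos_iff_support_of_nonneg_ae (μ := (volume : Measure (Cyl d)))
          (s := D) (f := fun x => - sdist d E x) ?_ hDint.neg).2 ?_
        · rw [integral_neg] at this; linarith
        · filter_upwards [ae_restrict_mem hDm] with x hx
          have := hneg x hx.1.1
          simp only [Pi.zero_apply]; linarith
        · rw [inter_eq_right.2]
          · exact pos_iff_ne_zero.2 hne
          · intro x hx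
            have := hneg x hx.1.1
            simp only [Function.mem_support]; linarith
      refine measure_mono_null (t := D ∪ {x : Cyl d | x.2 = -R}) ?_
        (measure_union_null hD0 (vol_hyper d _))
      rintro x ⟨hx1, hx2⟩
      have h3 : ¬ x.2 < -R := fun h => hx2 (hF.1.2.1 h)
      have h4 := hHMR.2.2 hx1
      rcases eq_or_lt_of_le (not_lt.1 h3) with h | h
      · exact Or.inr h.symm
      · exact Or.inl ⟨⟨hx1, hx2⟩, h, h4⟩
    · intro hEH
      have hP : P.P (F ∩ halfspace d lam) ≤ P.P F := by
        have h1 := P_half_le d P R hR _ hUn lam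
        rw [← ENNReal.add_le_add_iff_right hHt]
        refine le_trans ?_ hsub
        rw [add_comm]
        gcongr
      have h2 := hmin _ hIn hP
      set D := (F \ halfspace d lam) ∩ SlabR d R with hD
      have hDm : MeasurableSet D := (hFm.diff hHm).inter hSm
      have hsplit : F ∩ SlabR d R = ((F ∩ halfspace d lam) ∩ SlabR d R) ∪ D := by
        ext x; simp only [hD, mem_inter_iff, mem_union, Set.mem_sdiff]; tauto
      have hdisj : Disjoint ((F ∩ halfspace d lam) ∩ SlabR d R) D := by
        rw [Set.disjoint_left]; rintro x ⟨⟨_, h1⟩, _⟩ ⟨⟨_, h2⟩, _⟩; exact h2 h1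
      have hDint : IntegrableOn (sdist d E) D := hint.mono_set inter_subset_right
      rw [hsplit, setIntegral_union hdisj hDm (hint.mono_set inter_subset_right) hDint] at h2
      have hpos : ∀ x : Cyl d, lam < x.2 → 0 < sdist d E x := by
        intro x hx
        have hx1 : Metric.infDist x Eᶜ = 0 := Metric.infDist_zero_of_mem (fun hxE => by
          have := hEH hxE
          simp only [halfspace, mem_ofPred_eq] at this; linarith)
        have hx2 : 0 < Metric.infDist x E := by
          rw [← Metric.infDist_closure]
          refine (isClosed_closure.notMem_iff_infDist_pos hEne.closure).1 ?_
          intro hcl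
          have ho : IsOpen {y : Cyl d | lam < y.2} := isOpen_lt continuous_const continuous_snd
          obtain ⟨y, hy1, hy2⟩ := mem_closure_iff.1 hcl _ ho hx
          have := hEH hy2
          simp only [halfspace, mem_ofPred_eq] at this hy1; linarith
        simp only [sdist]; linarith
      have hDae : ∀ᵐ x ∂(volume.restrict D), 0 < sdist d E x := by
        have e2 : ∀ᵐ x : Cyl d, x.2 ≠ lam := by
          rw [ae_iff]; simpa using vol_hyper d lam
        filter_upwards [ae_restrict_mem hDm, ae_restrict_of_ae e2] with x hx hx2
        have h5 : ¬ x.2 < lam := hx.1.2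
        exact hpos x (lt_of_le_of_ne (not_lt.1 h5) (Ne.symm hx2))
      have hD0 : volume D = 0 := by
        by_contra hne
        have := (setIntegral_pos_iff_support_of_nonneg_ae (μ := (volume : Measure (Cyl d)))
          (s := D) (f := fun x => sdist d E x) ?_ hDint).2 ?_
        · linarith
        · filter_upwards [hDae] with x hx using hx.le
        · rw [← Measure.restrict_apply' hDm]
          have : Function.support (fun x => sdist d E x) =ᵐ[volume.restrict D] univ := by
            rw [eventuallyEq_univ]
            filter_upwards [hDae] with x hx using hx.ne'
          rw [measure_congr this, Measure.restrict_apply_univ]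
          exact pos_iff_ne_zero.2 hne
      refine measure_mono_null (t := D) ?_ hD0
      rintro x ⟨hx1, hx2⟩
      have h3 : ¬ x.2 < lam := hx2
      exact ⟨⟨hx1, hx2⟩, by linarith [hlam.1], hF.1.2.2 hx1⟩
  refine ⟨part1, ?_⟩
  intro r hr hrR hEr
  rcases eq_or_lt_of_le hrR with rfl | hlt
  · exact ⟨F, hF.1, by simp⟩
  · have h1 := (part1 (-r) ⟨by linarith, by linarith⟩).1 hEr.2.1
    have h2 := (part1 r ⟨by linarith, by linarith⟩).2 hEr.2.2
    refine ⟨(F ∪ halfspace d (-r)) ∩ halfspace d r,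
      ⟨(hFm.union (MR_half_meas d _)).inter (MR_half_meas d _), ?_, inter_subset_right⟩, ?_⟩
    · intro x hx
      refine ⟨Or.inr hx, ?_⟩
      simp only [halfspace, mem_ofPred_eq] at hx ⊢
      linarith
    · refine measure_mono_null ?_ (measure_union_null h1 h2)
      intro x hx
      simp only [mem_symmDiff, mem_inter_iff, mem_union, Set.mem_sdiff] at hx ⊢
      tauto
end
end
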